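/- arXiv:math/0303086 — 5 statements merged into one kernel-verified Lean document; each statement's English description precedes it below -/
import Mathlib

section
/- Let (R,m) be an Artinian local ring with m² = (0) that is not Gorenstein. Then every finitely generated R-module of G-dimension zero is free. -/
open CategoryTheory

noncomputable abbrev ExtGrp (R : Type) [CommRing R] (M N : Type) [AddCommGroup M] [Module R M]
    [AddCommGroup N] [Module R N] (i : ℕ) : Type :=
  ((Ext R (ModuleCat R) i).obj (Opposite.op (ModuleCat.of R M))).obj (ModuleCat.of R N)

/-- G-dimension zero. -/
def GDimZero (R : Type) [CommRing R] (M : Type) [AddCommGroup M] [Module R M] : Prop :=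
  Function.Bijective (Module.Dual.eval R M) ∧
  (∀ i : ℕ, 0 < i → Subsingleton (ExtGrp R M R i)) ∧
  (∀ i : ℕ, 0 < i → Subsingleton (ExtGrp R (Module.Dual R M) R i))

/-- finite self-injective dimension -/
def HasFiniteSelfInjDim (R : Type) [CommRing R] : Prop :=
  ∃ n : ℕ, ∀ (N : ModuleCat R) (i : ℕ), n < i →
    Subsingleton (((Ext R (ModuleCat R) i).obj (Opposite.op N)).obj (ModuleCat.of R R))

/-- Gorenstein local ring -/
def IsGorensteinLocalRing (R : Type) [CommRing R] : Prop :=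
  IsNoetherianRing R ∧ IsLocalRing R ∧ HasFiniteSelfInjDim R

/-- length of a module, as Krull dimension of its submodule lattice -/
noncomputable def mlength (R : Type) [CommRing R] (M : Type) [AddCommGroup M] [Module R M] :
    WithBot ℕ∞ :=
  Order.krullDim (Submodule R M)

/-- The derived-functor `Ext` and Mathlib's `Abelian.Ext` vanish simultaneously. -/
theorem aux_ext_iff {R : Type} [CommRing R] (X Y : ModuleCat.{0} R) (n : ℕ) :
    Subsingleton (((Ext R (ModuleCat R) (n + 1)).obj (Opposite.op X)).obj Y) ↔
      Subsingleton (Abelian.Ext.{0} X Y (n + 1)) := by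
  let P := projectiveResolution X
  have h1 : Subsingleton (((Ext R (ModuleCat R) (n + 1)).obj (Opposite.op X)).obj Y) ↔
      ∀ f : P.complex.X (n + 1) ⟶ Y, P.complex.d (n + 2) (n + 1) ≫ f = 0 →
        ∃ g : P.complex.X n ⟶ Y, P.complex.d (n + 1) n ≫ g = f := by
    rw [← ModuleCat.isZero_iff_subsingleton, (P.isoExt (R := R) (n + 1) Y).isZero_iff,
      ← HomologicalComplex.exactAt_iff_isZero_homology,
      HomologicalComplex.exactAt_iff' _ n (n + 1) (n + 2) (by simp) (by simp),
      ShortComplex.moduleCat_exact_iff]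
    rfl
  rw [h1]
  constructor
  · intro h
    refine subsingleton_of_forall_eq 0 fun e => ?_
    obtain ⟨f, hf, rfl⟩ := P.extMk_surjective e (n + 2) rfl
    rw [P.extMk_eq_zero_iff f (n + 2) rfl hf n rfl]
    exact h f hf
  · intro h f hf
    exact (P.extMk_eq_zero_iff f (n + 2) rfl hf n rfl).1 (Subsingleton.elim _ _)

/-- A module killed by the maximal ideal is semisimple. -/
theorem aux_semisimple {R : Type} [CommRing R] [IsLocalRing R] (L : Type) [AddCommGroup L]
    [Module R L] (h : ∀ r ∈ IsLocalRing.maximalIdeal R, ∀ x : L, r • x = 0) :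
    IsSemisimpleModule R L := by
  have ht : Module.IsTorsionBySet R L (IsLocalRing.maximalIdeal R : Set R) :=
    fun x r => h r.1 r.2 x
  let := Ideal.Quotient.field (IsLocalRing.maximalIdeal R)
  let := ht.module
  exact ht.isSemisimpleModule_iff.1 inferInstance

theorem aux_cover {R : Type} [CommRing R] [IsLocalRing R] (M : Type) [AddCommGroup M]
    [Module R M] [Module.Finite R M] :
    ∃ (ι : Type) (φ : (ι →₀ R) →ₗ[R] M), Function.Surjective φ ∧
      ∀ c, φ c = 0 → ∀ i, c i ∈ IsLocalRing.maximalIdeal R := by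
  let k := IsLocalRing.ResidueField R
  let w := Module.Free.chooseBasis k (TensorProduct R k M)
  obtain ⟨v, eq⟩ := (TensorProduct.mk_surjective R M k Ideal.Quotient.mk_surjective).comp_left w
  refine ⟨_, Finsupp.linearCombination R v, ?_, ?_⟩
  · rw [← LinearMap.range_eq_top, Finsupp.range_linearCombination]
    exact IsLocalRing.span_eq_top_of_tmul_eq_basis _ w (congr_fun eq)
  · intro c hc i
    have h1 := congrArg (TensorProduct.mk R k M 1) hc
    have eq' : (TensorProduct.mk R k M 1) ∘ v = w := eq
    rw [map_zero, Finsupp.apply_linearCombination, eq', Finsupp.linearCombination_apply,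
      Finsupp.sum] at h1
    have h2 := linearIndependent_iff'.1 w.linearIndependent c.support
      (fun j => IsLocalRing.residue R (c j)) (by
        rw [← h1]
        refine Finset.sum_congr rfl fun j _ => ?_
        exact algebraMap_smul k (c j) (w j))
    by_cases hi : i ∈ c.support
    · exact (IsLocalRing.residue_eq_zero_iff _).1 (h2 i hi)
    · rw [Finsupp.notMem_support_iff.1 hi]; exact zero_mem _

theorem aux_ses {R : Type} [CommRing R] {A B : Type} [AddCommGroup A] [Module R A]
    [AddCommGroup B] [Module R B] (φ : A →ₗ[R] B) (hφ : Function.Surjective φ) :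
    (ShortComplex.mk (ModuleCat.ofHom (LinearMap.ker φ).subtype) (ModuleCat.ofHom φ)
      (by ext x; exact x.2)).ShortExact where
  exact := by
    rw [ShortComplex.moduleCat_exact_iff]
    intro x hx
    exact ⟨⟨x, hx⟩, rfl⟩
  mono_f := (ModuleCat.mono_iff_injective _).2 Subtype.val_injective
  epi_g := (ModuleCat.epi_iff_surjective _).2 hφ

/-- Extension property from vanishing of `Ext¹`. -/
theorem aux_extend {R : Type} [CommRing R] {A B Q : Type} [AddCommGroup A] [Module R A]
    [AddCommGroup B] [Module R B] [AddCommGroup Q] [Module R Q]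
    (φ : A →ₗ[R] B) (hφ : Function.Surjective φ)
    (h : Subsingleton (Abelian.Ext.{0} (ModuleCat.of R B) (ModuleCat.of R Q) 1))
    (f : LinearMap.ker φ →ₗ[R] Q) : ∃ g : A →ₗ[R] Q, ∀ x : LinearMap.ker φ, g x = f x := by
  obtain ⟨e, he⟩ := Abelian.Ext.contravariant_sequence_exact₁ (aux_ses φ hφ)
    (ModuleCat.of R Q) (Abelian.Ext.mk₀ (ModuleCat.ofHom f)) (n₁ := 1) rfl
    (Subsingleton.elim (h := h) _ _)
  obtain ⟨g, rfl⟩ := Abelian.Ext.homEquiv₀.symm.surjective e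
  refine ⟨g.hom, fun x => ?_⟩
  have : ModuleCat.ofHom (LinearMap.ker φ).subtype ≫ g = ModuleCat.ofHom f :=
    Abelian.Ext.homEquiv₀.symm.injective (by simpa using he)
  exact congrArg (fun t => t.hom x) this

/-- Injections into semisimple modules split. -/
theorem aux_retract {R A L : Type} [CommRing R] [AddCommGroup A] [Module R A] [AddCommGroup L]
    [Module R L] [IsSemisimpleModule R L] (i : A →ₗ[R] L) (hi : Function.Injective i) :
    ∃ q : L →ₗ[R] A, ∀ a, q (i a) = a := by
  obtain ⟨K, hK⟩ := exists_isCompl (LinearMap.range i)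
  let e := LinearEquiv.ofInjective i hi
  refine ⟨e.symm.toLinearMap ∘ₗ (LinearMap.range i).projectionOnto K hK, fun a => ?_⟩
  have := Submodule.projectionOnto_apply_left hK (e a)
  change e.symm ((LinearMap.range i).projectionOnto K hK (e a)) = a
  rw [this, LinearEquiv.symm_apply_apply]

/-- If `Ext¹(L, R) = 0` for a nonzero `L` killed by the maximal ideal, then linear maps out of the
maximal ideal extend to `R`. -/
theorem aux_max {R : Type} [CommRing R] [IsLocalRing R] (L : Type) [AddCommGroup L]
    [Module R L] (hkill : ∀ r ∈ IsLocalRing.maximalIdeal R, ∀ x : L, r • x = 0)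
    (y : L) (hy : y ≠ 0)
    (hE1 : Subsingleton (Abelian.Ext.{0} (ModuleCat.of R L) (ModuleCat.of R R) 1))
    (f : IsLocalRing.maximalIdeal R →ₗ[R] R) : ∃ g : R →ₗ[R] R,
      ∀ x : IsLocalRing.maximalIdeal R, g x = f x := by
  have hss := aux_semisimple L hkill
  let S := Submodule.span R {y}
  obtain ⟨T, hT⟩ := hss.exists_isCompl S
  have hS : Subsingleton (Abelian.Ext.{0} (ModuleCat.of R S) (ModuleCat.of R R) 1) := by
    refine subsingleton_of_forall_eq 0 fun e => ?_
    let p := ModuleCat.ofHom (S.projectionOnto T hT)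
    let s := ModuleCat.ofHom S.subtype
    have hsp : s ≫ p = 𝟙 _ := by
      ext z
      exact congrArg Subtype.val (Submodule.projectionOnto_apply_left hT z)
    have h0 : (Abelian.Ext.mk₀ p).comp e (zero_add 1) = 0 := Subsingleton.elim (h := hE1) _ _
    have h1 : (Abelian.Ext.mk₀ s).comp ((Abelian.Ext.mk₀ p).comp e (zero_add 1)) (zero_add 1)
        = e := by
      simp [hsp]
    rw [← h1, h0, Abelian.Ext.comp_zero]
  let ψ : R →ₗ[R] S := LinearMap.toSpanSingleton R S ⟨y, Submodule.mem_span_singleton_self y⟩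
  have hψ : Function.Surjective ψ := by
    rintro ⟨z, hz⟩
    obtain ⟨r, rfl⟩ := Submodule.mem_span_singleton.1 hz
    exact ⟨r, rfl⟩
  have hψk : LinearMap.ker ψ = IsLocalRing.maximalIdeal R := by
    ext r
    constructor
    · intro hr
      by_contra hu
      have hu' : IsUnit r := by simpa using hu
      have : r • y = 0 := congrArg Subtype.val (LinearMap.mem_ker.1 hr)
      exact hy ((hu'.smul_eq_zero).1 this)
    · intro hr
      exact LinearMap.mem_ker.2 (Subtype.ext (hkill r hr y))
  revert f
  rw [← hψk]
  exact aux_extend ψ hψ hS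

theorem aux_baer {R : Type} [CommRing R] [IsLocalRing R]
    (hmm : ∀ r ∈ IsLocalRing.maximalIdeal R, ∀ s ∈ IsLocalRing.maximalIdeal R, r * s = 0)
    (hext : ∀ f : IsLocalRing.maximalIdeal R →ₗ[R] R, ∃ g : R →ₗ[R] R,
      ∀ x : IsLocalRing.maximalIdeal R, g x = f x) : Module.Baer R R := by
  intro I f
  by_cases hI : I = ⊤
  · subst hI
    exact ⟨f ∘ₗ (LinearEquiv.ofTop ⊤ rfl).symm.toLinearMap, fun x hx => rfl⟩
  have hle := IsLocalRing.le_maximalIdeal hI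
  have hsm := aux_semisimple (R := R) (IsLocalRing.maximalIdeal R)
    (fun r hr x => Subtype.ext (hmm r hr x x.2))
  obtain ⟨q, hq⟩ := aux_retract (Submodule.inclusion hle) (Submodule.inclusion_injective hle)
  obtain ⟨g, hg⟩ := hext (f ∘ₗ q)
  refine ⟨g, fun x hx => ?_⟩
  rw [hg ⟨x, hle hx⟩]
  exact congrArg f (hq ⟨x, hx⟩)

/-- over an Artinian local ring with m² = 0 that is not Gorenstein,
every finitely generated module of G-dimension zero is free. -/
theorem stmt_0 (R : Type) [CommRing R] [IsArtinianRing R] [IsLocalRing R]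
    (hm2 : (IsLocalRing.maximalIdeal R) ^ 2 = ⊥)
    (hng : ¬ IsGorensteinLocalRing R)
    (M : Type) [AddCommGroup M] [Module R M] [Module.Finite R M]
    (hG : GDimZero R M) : Module.Free R M := by
  have hmm : ∀ r ∈ IsLocalRing.maximalIdeal R, ∀ s ∈ IsLocalRing.maximalIdeal R, r * s = 0 := by
    intro r hr s hs
    have : r * s ∈ (IsLocalRing.maximalIdeal R) ^ 2 := by
      rw [pow_two]; exact Ideal.mul_mem_mul hr hs
    rwa [hm2] at this
  obtain ⟨ι, φ, hφ, hker⟩ := aux_cover (R := R) M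
  have hE2 : Subsingleton (Abelian.Ext.{0} (ModuleCat.of R M) (ModuleCat.of R R) 2) :=
    (aux_ext_iff _ _ 1).1 (hG.2.1 2 (by norm_num))
  by_cases hinj : LinearMap.ker φ = ⊥
  · exact Module.Free.of_equiv (LinearEquiv.ofBijective φ ⟨LinearMap.ker_eq_bot.1 hinj, hφ⟩)
  exfalso
  apply hng
  -- dimension shift
  have hE1 : Subsingleton (Abelian.Ext.{0} (ModuleCat.of R (LinearMap.ker φ))
      (ModuleCat.of R R) 1) := by
    refine subsingleton_of_forall_eq 0 fun e => ?_
    obtain ⟨x, rfl⟩ := Abelian.Ext.contravariant_sequence_exact₁ (aux_ses φ hφ)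
      (ModuleCat.of R R) e (n₁ := 2) rfl (Subsingleton.elim (h := hE2) _ _)
    have : Projective (ModuleCat.of R (ι →₀ R)) :=
      (IsProjective.iff_projective _).1 inferInstance
    have hx : x = 0 := Abelian.Ext.eq_zero_of_projective (P := ModuleCat.of R (ι →₀ R)) x
    rw [hx, Abelian.Ext.comp_zero]
  have hkill : ∀ r ∈ IsLocalRing.maximalIdeal R, ∀ x : LinearMap.ker φ, r • x = 0 := by
    intro r hr x
    ext i
    exact hmm r hr _ (hker x.1 x.2 i)
  obtain ⟨x, hx, hx0⟩ := Submodule.exists_mem_ne_zero_of_ne_bot hinj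
  let y : LinearMap.ker φ := ⟨x, hx⟩
  have hy : y ≠ 0 := fun h => hx0 (congrArg Subtype.val h)
  have hBaer := aux_baer hmm (aux_max _ hkill y hy hE1)
  have hInj : Injective (ModuleCat.of R R) :=
    have := hBaer.injective
    Module.injective_object_of_injective_module R R
  refine ⟨inferInstance, inferInstance, 0, fun N i hi => ?_⟩
  obtain ⟨i, rfl⟩ : ∃ n, i = n + 1 := ⟨i - 1, by omega⟩
  rw [aux_ext_iff]
  exact subsingleton_of_forall_eq 0 fun e => e.eq_zero_of_injective
end

section
/- Let (R,m) be a Cohen-Macaulay local ring with minimal multiplicity (i.e., there is a system of parameters x₁,...,x_d with (x₁,...,x_d)m = m²) that is not Gorenstein. Then every finitely generated R-module of G-dimension zero is free. -/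
open CategoryTheory

section
variable {R : Type} [CommRing R]

lemma les_con2 {S : ShortComplex (ModuleCat.{0} R)} (hS : S.ShortExact) (Y : ModuleCat.{0} R) (n : ℕ)
    (h1 : Subsingleton (Abelian.Ext S.X₁ Y n)) (h3 : Subsingleton (Abelian.Ext S.X₃ Y n)) :
    Subsingleton (Abelian.Ext S.X₂ Y n) := by
  refine subsingleton_of_forall_eq 0 fun x => ?_
  obtain ⟨y, rfl⟩ := Abelian.Ext.contravariant_sequence_exact₂ hS Y x (Subsingleton.elim _ _)
  rw [Subsingleton.elim y 0, Abelian.Ext.comp_zero]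

lemma les_con3 {S : ShortComplex (ModuleCat.{0} R)} (hS : S.ShortExact) (Y : ModuleCat.{0} R) (n : ℕ)
    (h1 : Subsingleton (Abelian.Ext S.X₁ Y n)) (h2 : Subsingleton (Abelian.Ext S.X₂ Y (n+1))) :
    Subsingleton (Abelian.Ext S.X₃ Y (n+1)) := by
  refine subsingleton_of_forall_eq 0 fun x => ?_
  obtain ⟨y, rfl⟩ := Abelian.Ext.contravariant_sequence_exact₃ hS Y x (Subsingleton.elim _ _) (add_comm 1 n)
  rw [Subsingleton.elim y 0, Abelian.Ext.comp_zero]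

lemma les_con1 {S : ShortComplex (ModuleCat.{0} R)} (hS : S.ShortExact) (Y : ModuleCat.{0} R) (n : ℕ)
    (h2 : Subsingleton (Abelian.Ext S.X₂ Y n)) (h3 : Subsingleton (Abelian.Ext S.X₃ Y (n+1))) :
    Subsingleton (Abelian.Ext S.X₁ Y n) := by
  refine subsingleton_of_forall_eq 0 fun x => ?_
  obtain ⟨y, rfl⟩ := Abelian.Ext.contravariant_sequence_exact₁ hS Y x (add_comm 1 n) (Subsingleton.elim _ _)
  rw [Subsingleton.elim y 0, Abelian.Ext.comp_zero]

lemma les_cov3 {S : ShortComplex (ModuleCat.{0} R)} (hS : S.ShortExact) (X : ModuleCat.{0} R) (n : ℕ)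
    (h2 : Subsingleton (Abelian.Ext X S.X₂ n)) (h1 : Subsingleton (Abelian.Ext X S.X₁ (n+1))) :
    Subsingleton (Abelian.Ext X S.X₃ n) := by
  refine subsingleton_of_forall_eq 0 fun x => ?_
  obtain ⟨y, rfl⟩ := Abelian.Ext.covariant_sequence_exact₃ X hS x rfl (Subsingleton.elim _ _)
  rw [Subsingleton.elim y 0, Abelian.Ext.zero_comp]

lemma ext_retract {X X' Y : ModuleCat.{0} R} (h : Retract X X') (n : ℕ)
    (h1 : Subsingleton (Abelian.Ext X' Y n)) : Subsingleton (Abelian.Ext X Y n) := by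
  refine subsingleton_of_forall_eq 0 fun x => ?_
  rw [← x.mk₀_id_comp, ← h.retract, ← Abelian.Ext.mk₀_comp_mk₀, Abelian.Ext.comp_assoc_of_second_deg_zero,
    Subsingleton.elim ((Abelian.Ext.mk₀ h.r).comp x (zero_add _)) 0, Abelian.Ext.comp_zero]

lemma bridge (X Y : ModuleCat.{0} R) (n : ℕ) :
    Subsingleton (((Ext R (ModuleCat R) (n+1)).obj (Opposite.op X)).obj Y) ↔
      Subsingleton (Abelian.Ext X Y (n+1)) := by
  let P := projectiveResolution X
  have h1 : Subsingleton (((Ext R (ModuleCat R) (n+1)).obj (Opposite.op X)).obj Y) ↔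
      ∀ f : P.complex.X (n+1) ⟶ Y, P.complex.d (n+2) (n+1) ≫ f = 0 →
        ∃ g : P.complex.X n ⟶ Y, P.complex.d (n+1) n ≫ g = f := by
    rw [← ModuleCat.isZero_iff_subsingleton, (P.isoExt (R := R) (n+1) Y).isZero_iff,
      ← HomologicalComplex.exactAt_iff_isZero_homology,
      HomologicalComplex.exactAt_iff' _ n (n+1) (n+2) (by simp) (by simp),
      ShortComplex.moduleCat_exact_iff]
    exact Iff.rfl
  have h2 : Subsingleton (Abelian.Ext X Y (n+1)) ↔
      ∀ f : P.complex.X (n+1) ⟶ Y, P.complex.d (n+2) (n+1) ≫ f = 0 →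
        ∃ g : P.complex.X n ⟶ Y, P.complex.d (n+1) n ≫ g = f := by
    constructor
    · intro h f hf
      exact (P.extMk_eq_zero_iff f (n+2) rfl hf n rfl).1 (Subsingleton.elim _ _)
    · intro h
      refine subsingleton_of_forall_eq 0 fun x => ?_
      obtain ⟨f, hf, rfl⟩ := P.extMk_surjective x (n+2) rfl
      exact (P.extMk_eq_zero_iff f (n+2) rfl hf n rfl).2 (h f hf)
  rw [h1, h2]

lemma inj_dim_of_cyclic (n : ℕ) (A : ModuleCat.{0} R)
    (h : ∀ (I : Ideal R) (i : ℕ), n < i → Subsingleton (Abelian.Ext (ModuleCat.of R (R ⧸ I)) A i)) :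
    HasInjectiveDimensionLT A (n+1) := by
  induction n generalizing A with
  | zero =>
    rw [zero_add, ← injective_iff_hasInjectiveDimensionLT_one]
    have : Module.Baer R A := by
      intro I g
      have := h I 1 one_pos
      let S : ShortComplex (ModuleCat.{0} R) := ShortComplex.mk (ModuleCat.ofHom I.subtype) (ModuleCat.ofHom I.mkQ)
        (by ext x; simpa using Ideal.Quotient.eq_zero_iff_mem.2 x.2)
      have hS : S.ShortExact :=
        { exact := ModuleCat.shortComplex_exact _ (LinearMap.exact_subtype_mkQ I)
          mono_f := (ModuleCat.mono_iff_injective _).2 I.injective_subtype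
          epi_g := (ModuleCat.epi_iff_surjective _).2 I.mkQ_surjective }
      obtain ⟨φ, hφ⟩ := Abelian.Ext.contravariant_sequence_exact₁ hS A
        (Abelian.Ext.mk₀ (ModuleCat.ofHom g)) (zero_add 1) (Subsingleton.elim (α := Abelian.Ext (ModuleCat.of R (R ⧸ I)) A 1) _ _)
      obtain ⟨φ, rfl⟩ := Abelian.Ext.homEquiv₀.symm.surjective φ
      simp only [Abelian.Ext.homEquiv₀_symm_apply, Abelian.Ext.mk₀_comp_mk₀] at hφ
      have h2 := (Abelian.Ext.mk₀_bijective _ _).1 hφ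
      refine ⟨φ.hom, fun x hx => ?_⟩
      exact congr($(h2).hom ⟨x, hx⟩)
    exact (Module.injective_iff_injective_object R A).1 this.injective
  | succ n ih =>
    let S := ShortComplex.mk (Injective.ι A) (Limits.cokernel.π (Injective.ι A)) (by simp)
    have hS : S.ShortExact := { exact := ShortComplex.exact_cokernel _ }
    have : Injective S.X₂ := inferInstanceAs (Injective (Injective.under A))
    have h3 : HasInjectiveDimensionLT S.X₃ (n+1) := by
      apply ih
      intro I i hi
      refine les_cov3 hS _ _ ?_ (h I (i+1) (by omega))
      exact HasInjectiveDimensionLT.subsingleton S.X₂ 1 i (by omega) _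
    exact hS.hasInjectiveDimensionLT_X₁ (n+1) h3 inferInstance


open IsLocalRing in
lemma ext_cyclic_vanish [IsNoetherianRing R] [IsLocalRing R] (n : ℕ) (A : ModuleCat.{0} R) [Module.Finite R A]
    (hk : ∀ i : ℕ, n < i →
      Subsingleton (Abelian.Ext (ModuleCat.of R (R ⧸ maximalIdeal R)) A i))
    (I : Ideal R) : ∀ (i : ℕ), n < i → Subsingleton (Abelian.Ext (ModuleCat.of R (R ⧸ I)) A i) := by
  induction I using IsNoetherian.induction with
  | hgt I ih =>
    intro i hi
    by_cases hI : I = ⊤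
    · have : Subsingleton (R ⧸ I) := Submodule.Quotient.subsingleton_iff.2 hI
      have hz : Limits.IsZero (ModuleCat.of R (R ⧸ I)) := ModuleCat.isZero_of_subsingleton _
      refine subsingleton_of_forall_eq 0 fun x => ?_
      rw [← x.mk₀_id_comp, hz.eq_zero_of_src (𝟙 _), Abelian.Ext.mk₀_zero, Abelian.Ext.zero_comp]
    by_cases hm : I = maximalIdeal R
    · subst hm; exact hk i hi
    have hlt : I < maximalIdeal R := lt_of_le_of_ne (le_maximalIdeal hI) hm
    -- the basic exact sequence
    have key : ∀ a : R, ∃ (f : (R ⧸ (Submodule.comap (LinearMap.lsmul R R a) I)) →ₗ[R] R ⧸ I)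
        (g : (R ⧸ I) →ₗ[R] (R ⧸ (I ⊔ Ideal.span {a}))), Function.Injective f ∧ Function.Exact f g ∧
        Function.Surjective g ∧ ∀ x, f (Submodule.Quotient.mk x) = Submodule.Quotient.mk (a * x) := by
      intro a
      refine ⟨Submodule.mapQ _ _ (LinearMap.lsmul R R a) le_rfl,
        Submodule.factor le_sup_left, ?_, ?_, Submodule.factor_surjective _, fun x => rfl⟩
      · rw [← LinearMap.ker_eq_bot, LinearMap.ker_eq_bot']
        intro x hx
        obtain ⟨x, rfl⟩ := Submodule.Quotient.mk_surjective _ x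
        rw [Submodule.mapQ_apply, Submodule.Quotient.mk_eq_zero] at hx
        exact (Submodule.Quotient.mk_eq_zero _).2 hx
      · intro y
        obtain ⟨y, rfl⟩ := Submodule.Quotient.mk_surjective _ y
        constructor
        · intro h
          have h : y ∈ I ⊔ Ideal.span {a} := (Submodule.Quotient.mk_eq_zero _).1 h
          obtain ⟨u, hu, v, hv, rfl⟩ := Submodule.mem_sup.1 h
          obtain ⟨w, rfl⟩ := Ideal.mem_span_singleton.1 hv
          refine ⟨Submodule.Quotient.mk w, ?_⟩
          rw [Submodule.mapQ_apply, Submodule.Quotient.eq]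
          have : (LinearMap.lsmul R R a) w - (u + a * w) = -u := by simp
          rw [this]; exact I.neg_mem hu
        · rintro ⟨w, hw⟩
          obtain ⟨w, rfl⟩ := Submodule.Quotient.mk_surjective _ w
          rw [← hw]
          exact (Submodule.Quotient.mk_eq_zero _).2
            (Submodule.mem_sup_right (Ideal.mem_span_singleton.2 ⟨w, rfl⟩))
    by_cases hp : Ideal.IsPrime I
    · obtain ⟨a, ha, haI⟩ := SetLike.exists_of_lt hlt
      have hJ : Submodule.comap (LinearMap.lsmul R R a) I = I := by
        ext x
        simp only [Submodule.mem_comap, LinearMap.lsmul_apply, smul_eq_mul]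
        exact ⟨fun h => (hp.mem_or_mem h).resolve_left haI, fun h => Ideal.mul_mem_left I _ h⟩
      have hkey := key a
      rw [hJ] at hkey
      obtain ⟨f, g, hf, hfg, hg, hfa⟩ := hkey
      let S : ShortComplex (ModuleCat.{0} R) := ShortComplex.mk (ModuleCat.ofHom f) (ModuleCat.ofHom g)
        (by ext; exact hfg.apply_apply_eq_zero _)
      have hS : S.ShortExact :=
        { exact := ModuleCat.shortComplex_exact _ hfg
          mono_f := (ModuleCat.mono_iff_injective _).2 hf
          epi_g := (ModuleCat.epi_iff_surjective _).2 hg }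
      have h3 : Subsingleton (Abelian.Ext S.X₃ A (i+1)) := by
        refine ih _ (lt_of_le_of_ne le_sup_left fun h => haI ?_) (i+1) (by omega)
        rw [h]; exact Submodule.mem_sup_right (Ideal.mem_span_singleton_self a)
      have hfS : S.f = a • 𝟙 S.X₂ := by
        refine ModuleCat.hom_ext (LinearMap.ext fun x => ?_)
        obtain ⟨x, rfl⟩ := Submodule.Quotient.mk_surjective _ x
        exact hfa x
      rw [← Submodule.subsingleton_iff R, ← subsingleton_iff_bot_eq_top, eq_comm]
      have : Module.Finite R (Abelian.Ext (ModuleCat.of R (R ⧸ I)) A i) :=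
        ModuleCat.finite_ext _ _ _ _
      refine Submodule.eq_bot_of_le_smul_of_le_jacobson_bot (maximalIdeal R) _ Module.Finite.fg_top ?_
        (jacobson_eq_maximalIdeal ⊥ bot_ne_top).ge
      rintro x -
      obtain ⟨y, hy⟩ := Abelian.Ext.contravariant_sequence_exact₁ hS A x (add_comm 1 i) (Subsingleton.elim _ _)
      rw [hfS, Abelian.Ext.mk₀_smul, Abelian.Ext.smul_comp, Abelian.Ext.mk₀_id_comp] at hy
      rw [← hy]
      exact Submodule.smul_mem_smul ha trivial
    · obtain ⟨a, b, hab, ha, hb⟩ : ∃ a b, a * b ∈ I ∧ a ∉ I ∧ b ∉ I := by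
        by_contra! hcon
        exact hp ⟨hI, fun {a b} h => or_iff_not_imp_left.2 (fun h' => hcon a b h h')⟩
      obtain ⟨f, g, hf, hfg, hg, hfa⟩ := key a
      let S : ShortComplex (ModuleCat.{0} R) := ShortComplex.mk (ModuleCat.ofHom f) (ModuleCat.ofHom g)
        (by ext; exact hfg.apply_apply_eq_zero _)
      have hS : S.ShortExact :=
        { exact := ModuleCat.shortComplex_exact _ hfg
          mono_f := (ModuleCat.mono_iff_injective _).2 hf
          epi_g := (ModuleCat.epi_iff_surjective _).2 hg }
      refine les_con2 hS A i (ih _ (lt_of_le_of_ne ?_ fun h => hb ?_) i hi)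
        (ih _ (lt_of_le_of_ne le_sup_left fun h => ha ?_) i hi)
      · intro x hx; exact Ideal.mul_mem_left I _ hx
      · rw [h]; exact hab
      · rw [h]; exact Submodule.mem_sup_right (Ideal.mem_span_singleton_self a)


open Pointwise RingTheory.Sequence in
lemma weaklyRegular_hom (N : Type) [AddCommGroup N] [Module R N] (rs : List R) :
    ∀ (A : Type) [AddCommGroup A] [Module R A],
    (∀ i : ℕ, 0 < i → Subsingleton (Abelian.Ext (ModuleCat.of R N) (ModuleCat.of R A) i)) →
    IsWeaklyRegular A rs → IsWeaklyRegular (N →ₗ[R] A) rs := by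
  induction rs with
  | nil => intro A _ _ _ _; exact IsWeaklyRegular.nil R _
  | cons r rs ih =>
    intro A _ _ hE hA
    rw [isWeaklyRegular_cons_iff] at hA ⊢
    obtain ⟨h1, h2⟩ := hA
    have hS : (ModuleCat.smulShortComplex (ModuleCat.of R A) r).ShortExact :=
      IsSMulRegular.smulShortComplex_shortExact (M := ModuleCat.of R A) h1
    have hE' : ∀ i : ℕ, 0 < i →
        Subsingleton (Abelian.Ext (ModuleCat.of R N) (ModuleCat.of R (QuotSMulTop r A)) i) :=
      fun i hi => les_cov3 hS _ i (hE i hi) (hE (i+1) (by omega))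
    have h3 := ih (QuotSMulTop r A) hE' h2
    refine ⟨fun f g hfg => LinearMap.ext fun x => h1 (LinearMap.congr_fun hfg x), ?_⟩
    let q : A →ₗ[R] QuotSMulTop r A := Submodule.mkQ _
    let φ : (N →ₗ[R] A) →ₗ[R] (N →ₗ[R] QuotSMulTop r A) := LinearMap.compRight R q
    have hφ : Function.Surjective φ := by
      intro g
      have := hE 1 one_pos
      obtain ⟨y, hy⟩ := Abelian.Ext.covariant_sequence_exact₃ (ModuleCat.of R N) hS
        (Abelian.Ext.mk₀ (ModuleCat.ofHom g)) (zero_add 1)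
        (Subsingleton.elim (α := Abelian.Ext (ModuleCat.of R N) (ModuleCat.of R A) 1) _ _)
      obtain ⟨y, rfl⟩ := Abelian.Ext.homEquiv₀.symm.surjective y
      simp only [Abelian.Ext.homEquiv₀_symm_apply, Abelian.Ext.mk₀_comp_mk₀] at hy
      have h2 := (Abelian.Ext.mk₀_bijective _ _).1 hy
      exact ⟨y.hom, LinearMap.ext fun x => congr($(h2).hom x)⟩
    have hker : LinearMap.ker φ = r • (⊤ : Submodule R (N →ₗ[R] A)) := by
      ext f
      rw [Submodule.mem_smul_pointwise_iff_exists]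
      constructor
      · intro hf
        have hf' : ∀ x, ∃ y, r • y = f x := by
          intro x
          have : q (f x) = 0 := LinearMap.congr_fun (LinearMap.mem_ker.1 hf) x
          rw [Submodule.mkQ_apply, Submodule.Quotient.mk_eq_zero, Submodule.mem_smul_pointwise_iff_exists] at this
          obtain ⟨y, -, hy⟩ := this
          exact ⟨y, hy⟩
        choose g hg using hf'
        refine ⟨{ toFun := g, map_add' := fun x y => h1 ?_, map_smul' := fun c x => h1 ?_ }, trivial, LinearMap.ext hg⟩
        · simp only [smul_add, hg, map_add]
        · simp only [RingHom.id_apply]; rw [smul_comm, hg, hg, map_smul]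
      · rintro ⟨g, -, rfl⟩
        refine LinearMap.ext fun x => ?_
        change q (r • g x) = 0
        rw [Submodule.mkQ_apply, Submodule.Quotient.mk_eq_zero]
        exact Submodule.smul_mem_pointwise_smul _ _ _ trivial
    let e : QuotSMulTop r (N →ₗ[R] A) ≃ₗ[R] (N →ₗ[R] QuotSMulTop r A) :=
      (Submodule.quotEquivOfEq _ _ hker.symm).trans (φ.quotKerEquivOfSurjective hφ)
    exact (e.isWeaklyRegular_congr rs).2 h3

lemma ext_congr {N N' : Type} [AddCommGroup N] [Module R N] [AddCommGroup N'] [Module R N']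
    (e : N ≃ₗ[R] N') (Y : ModuleCat.{0} R) (n : ℕ)
    (h : Subsingleton (Abelian.Ext (ModuleCat.of R N') Y n)) :
    Subsingleton (Abelian.Ext (ModuleCat.of R N) Y n) :=
  ext_retract e.toModuleIso.retract n h

open RingTheory.Sequence in
lemma ext_quot (Y : ModuleCat.{0} R) (rs : List R) :
    ∀ (n : ℕ) (N : Type) [AddCommGroup N] [Module R N],
    (∀ i : ℕ, n < i → Subsingleton (Abelian.Ext (ModuleCat.of R N) Y i)) →
    IsWeaklyRegular N rs → ∀ i : ℕ, n + rs.length < i →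
      Subsingleton (Abelian.Ext (ModuleCat.of R (N ⧸ (Ideal.ofList rs • ⊤ : Submodule R N))) Y i) := by
  induction rs with
  | nil =>
    intro n N _ _ hE _ i hi
    refine ext_congr (Submodule.quotEquivOfEqBot _ ?_) Y i (hE i (by simpa using hi))
    simp
  | cons r rs ih =>
    intro n N _ _ hE hN i hi
    rw [isWeaklyRegular_cons_iff] at hN
    obtain ⟨h1, h2⟩ := hN
    have hS : (ModuleCat.smulShortComplex (ModuleCat.of R N) r).ShortExact :=
      IsSMulRegular.smulShortComplex_shortExact (M := ModuleCat.of R N) h1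
    have hE' : ∀ i : ℕ, n + 1 < i →
        Subsingleton (Abelian.Ext (ModuleCat.of R (QuotSMulTop r N)) Y i) := by
      intro i hi
      obtain ⟨i, rfl⟩ : ∃ j, i = j + 1 := ⟨i - 1, by omega⟩
      exact les_con3 hS _ i (hE i (by omega)) (hE (i+1) (by omega))
    refine ext_congr (Submodule.quotOfListConsSMulTopEquivQuotSMulTopInner N r rs) Y i
      (ih (n+1) _ hE' h2 i ?_)
    simp only [List.length_cons] at hi
    omega

open IsLocalRing in
lemma minimal_cover [IsLocalRing R] (M : Type) [AddCommGroup M] [Module R M] [Module.Finite R M] :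
    ∃ (n : ℕ) (f : (Fin n → R) →ₗ[R] M), Function.Surjective f ∧
      ∀ c, f c = 0 → ∀ i, c i ∈ maximalIdeal R := by
  classical
  have hex : ∃ n : ℕ, ∃ f : (Fin n → R) →ₗ[R] M, Function.Surjective f :=
    Module.Finite.exists_fin' R M
  obtain ⟨f, hf⟩ := Nat.find_spec hex
  have hmin : ∀ k < Nat.find hex, ¬ ∃ f : (Fin k → R) →ₗ[R] M, Function.Surjective f :=
    fun k hk => Nat.find_min hex hk
  generalize Nat.find hex = n at f hf hmin
  refine ⟨n, f, hf, fun c hc i => ?_⟩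
  by_contra hi
  have hu : IsUnit (c i) := by simpa using hi
  obtain ⟨u, hu⟩ := hu
  obtain _ | k := n
  · exact i.elim0
  refine hmin k (by omega) ⟨f ∘ₗ LinearMap.pi (fun j => if h : ∃ l, i.succAbove l = j then
    LinearMap.proj h.choose else 0), ?_⟩
  have hval : ∀ (d : Fin (k+1) → R), d i = 0 → (LinearMap.pi (fun j => if h : ∃ l, i.succAbove l = j then
    LinearMap.proj h.choose else 0) : (Fin k → R) →ₗ[R] (Fin (k+1) → R)) (fun l => d (i.succAbove l)) = d := by
    intro d hd
    ext j
    rw [LinearMap.pi_apply]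
    split_ifs with h
    · simp [h.choose_spec]
    · have : j = i := by
        by_contra hji
        exact h (Fin.exists_succAbove_eq hji)
      simp [this, hd]
  intro m
  obtain ⟨d, rfl⟩ := hf m
  refine ⟨fun l => (d - (d i * (↑u⁻¹ : R)) • c) (i.succAbove l), ?_⟩
  rw [LinearMap.comp_apply, hval, map_sub, map_smul, hc, smul_zero, sub_zero]
  simp [← hu]

lemma ext_residue [IsLocalRing R] (V : Type) [AddCommGroup V] [Module R V] [Nontrivial V]
    (hV : ∀ a ∈ IsLocalRing.maximalIdeal R, ∀ v : V, a • v = 0) (Y : ModuleCat.{0} R) (n : ℕ)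
    (h : Subsingleton (Abelian.Ext (ModuleCat.of R V) Y n)) :
    Subsingleton (Abelian.Ext (ModuleCat.of R (R ⧸ IsLocalRing.maximalIdeal R)) Y n) := by
  let m := IsLocalRing.maximalIdeal R
  have ht : Module.IsTorsionBySet R V (m : Set R) := fun v a => hV a.1 a.2 v
  letI : Field (R ⧸ m) := Ideal.Quotient.field m
  letI : Module (R ⧸ m) V := ht.module
  haveI : IsScalarTower R (R ⧸ m) V := ht.isScalarTower
  obtain ⟨v, hv⟩ := exists_ne (0 : V)
  let f : (R ⧸ m) →ₗ[R ⧸ m] V := LinearMap.toSpanSingleton (R ⧸ m) V v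
  obtain ⟨g, hg⟩ := f.exists_leftInverse_of_injective
    (LinearMap.ker_toSpanSingleton (R ⧸ m) hv)
  refine ext_retract (X' := ModuleCat.of R V) ⟨ModuleCat.ofHom (f.restrictScalars R),
    ModuleCat.ofHom (g.restrictScalars R), ?_⟩ n h
  refine ModuleCat.hom_ext (LinearMap.ext fun x => ?_)
  exact LinearMap.congr_fun hg x

lemma quot_shortExact {L F M : Type} [AddCommGroup L] [Module R L] [AddCommGroup F] [Module R F]
    [AddCommGroup M] [Module R M] (f : L →ₗ[R] F) (g : F →ₗ[R] M) (hf : Function.Injective f)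
    (hfg : Function.Exact f g) (hg : Function.Surjective g) (rs : List R)
    (hM : RingTheory.Sequence.IsWeaklyRegular M rs) :
    let I := Ideal.ofList rs
    ∃ (f' : (L ⧸ (I • ⊤ : Submodule R L)) →ₗ[R] (F ⧸ (I • ⊤ : Submodule R F)))
      (g' : (F ⧸ (I • ⊤ : Submodule R F)) →ₗ[R] (M ⧸ (I • ⊤ : Submodule R M))),
      Function.Injective f' ∧ Function.Exact f' g' ∧ Function.Surjective g' ∧
      ∀ l, f' (Submodule.Quotient.mk l) = Submodule.Quotient.mk (f l) := by
  intro I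
  refine ⟨Submodule.mapQ _ _ f (Submodule.smul_top_le_comap_smul_top I f),
    Submodule.mapQ _ _ g (Submodule.smul_top_le_comap_smul_top I g), ?_, ?_, ?_, fun l => rfl⟩
  · have h0 : Function.Exact (0 : PUnit.{1} →ₗ[R] L) f := by
      intro x
      constructor
      · intro hx; exact ⟨0, (hf (by simpa using hx)).symm⟩
      · rintro ⟨y, rfl⟩; simp
    have := RingTheory.Sequence.map_first_exact_on_four_term_right_exact_of_isSMulRegular_last
      h0 hfg hg hM
    rw [← LinearMap.ker_eq_bot, LinearMap.ker_eq_bot']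
    intro x hx
    obtain ⟨y, rfl⟩ := (this x).1 hx
    obtain ⟨y, rfl⟩ := Submodule.Quotient.mk_surjective _ y
    simp
  · intro y
    obtain ⟨y, rfl⟩ := Submodule.Quotient.mk_surjective _ y
    constructor
    · intro h
      rw [Submodule.mapQ_apply, Submodule.Quotient.mk_eq_zero] at h
      have hI : (I • ⊤ : Submodule R M) = Submodule.map g (I • ⊤) := by
        rw [Submodule.map_smul'', Submodule.map_top, LinearMap.range_eq_top.2 hg]
      rw [hI] at h
      obtain ⟨z, hz, hzy⟩ := h
      obtain ⟨l, hl⟩ := (hfg (y - z)).1 (by rw [map_sub, hzy, sub_self])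
      refine ⟨Submodule.Quotient.mk l, ?_⟩
      rw [Submodule.mapQ_apply, Submodule.Quotient.eq, hl]
      simpa using hz
    · rintro ⟨l, hl⟩
      obtain ⟨l, rfl⟩ := Submodule.Quotient.mk_surjective _ l
      rw [← hl, Submodule.mapQ_apply, Submodule.mapQ_apply, hfg.apply_apply_eq_zero]
      simp
  · intro y
    obtain ⟨y, rfl⟩ := Submodule.Quotient.mk_surjective _ y
    obtain ⟨x, rfl⟩ := hg y
    exact ⟨Submodule.Quotient.mk x, rfl⟩

end

/-- over a Cohen-Macaulay local ring with minimal multiplicity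
(there is a system of parameters x with (x)m = m², which is a regular sequence)
that is not Gorenstein, every finitely generated module of G-dimension zero is free. -/
theorem stmt_1 (R : Type) [CommRing R] [IsNoetherianRing R] [IsLocalRing R]
    (hCM : ∃ (d : ℕ) (x : Fin d → R),
      ringKrullDim R = d ∧
      (∀ i, x i ∈ IsLocalRing.maximalIdeal R) ∧
      IsLocalRing.maximalIdeal R ≤ (Ideal.span (Set.range x)).radical ∧
      RingTheory.Sequence.IsRegular R (List.ofFn x) ∧
      Ideal.span (Set.range x) * IsLocalRing.maximalIdeal R = (IsLocalRing.maximalIdeal R) ^ 2)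
    (hng : ¬ IsGorensteinLocalRing R)
    (M : Type) [AddCommGroup M] [Module R M] [Module.Finite R M]
    (hG : GDimZero R M) : Module.Free R M := by
  obtain ⟨d, x, -, hxm, -, hreg, hmin⟩ := hCM
  obtain ⟨hbij, hE, hE'⟩ := hG
  have hEM : ∀ i : ℕ, 0 < i → Subsingleton (Abelian.Ext (ModuleCat.of R M) (ModuleCat.of R R) i) := by
    intro i hi
    obtain ⟨i, rfl⟩ : ∃ j, i = j + 1 := ⟨i - 1, by omega⟩
    exact (bridge _ _ i).1 (hE (i+1) hi)
  have hED : ∀ i : ℕ, 0 < i →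
      Subsingleton (Abelian.Ext (ModuleCat.of R (Module.Dual R M)) (ModuleCat.of R R) i) := by
    intro i hi
    obtain ⟨i, rfl⟩ : ∃ j, i = j + 1 := ⟨i - 1, by omega⟩
    exact (bridge _ _ i).1 (hE' (i+1) hi)
  set rs := List.ofFn x with hrs
  have hI : Ideal.ofList rs = Ideal.span (Set.range x) := by
    rw [Ideal.ofList]; congr 1; ext y; simp [hrs, List.mem_ofFn]
  have hM : RingTheory.Sequence.IsWeaklyRegular M rs :=
    ((LinearEquiv.ofBijective _ hbij).isWeaklyRegular_congr rs).2
      (weaklyRegular_hom (Module.Dual R M) rs R hED hreg.toIsWeaklyRegular)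
  obtain ⟨n, f, hf, hfm⟩ := minimal_cover (R := R) M
  have hEF : ∀ i : ℕ, 0 < i →
      Subsingleton (Abelian.Ext (ModuleCat.of R (Fin n → R)) (ModuleCat.of R R) i) := by
    intro i hi
    obtain ⟨i, rfl⟩ : ∃ j, i = j + 1 := ⟨i - 1, by omega⟩
    have : Projective (ModuleCat.of R (Fin n → R)) :=
      ModuleCat.projective_of_free (Pi.basisFun R (Fin n))
    exact subsingleton_of_forall_eq 0 fun e => e.eq_zero_of_projective
  have hF : RingTheory.Sequence.IsWeaklyRegular (Fin n → R) rs :=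
    ((Module.evalEquiv R (Fin n → R)).isWeaklyRegular_congr rs).2
      (weaklyRegular_hom (Module.Dual R (Fin n → R)) rs R (fun i hi =>
        ext_congr (Module.piEquiv (Fin n) R R).symm _ i (hEF i hi)) hreg.toIsWeaklyRegular)
  by_cases hL : LinearMap.ker f = ⊥
  · exact Module.Free.of_equiv (LinearEquiv.ofBijective f ⟨LinearMap.ker_eq_bot.1 hL, hf⟩)
  exfalso
  apply hng
  refine ⟨inferInstance, inferInstance, d, ?_⟩
  obtain ⟨f', g', hf', hfg', hg', hmk⟩ := quot_shortExact (LinearMap.ker f).subtype f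
    (Submodule.injective_subtype _) (LinearMap.exact_subtype_ker_map f) hf rs hM
  let S : ShortComplex (ModuleCat.{0} R) := ShortComplex.mk (ModuleCat.ofHom f') (ModuleCat.ofHom g')
    (ModuleCat.hom_ext (LinearMap.ext fun x => hfg'.apply_apply_eq_zero x))
  have hS : S.ShortExact :=
    { exact := ModuleCat.shortComplex_exact _ hfg'
      mono_f := (ModuleCat.mono_iff_injective _).2 hf'
      epi_g := (ModuleCat.epi_iff_surjective _).2 hg' }
  have hlen : rs.length = d := by simp [hrs]
  have hEL : ∀ i : ℕ, d < i → Subsingleton (Abelian.Ext S.X₁ (ModuleCat.of R R) i) := by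
    intro i hi
    exact les_con1 hS _ i (ext_quot _ rs 0 _ hEF hF i (by omega))
      (ext_quot _ rs 0 _ hEM hM (i+1) (by omega))
  have hIm : Ideal.ofList rs ≤ IsLocalRing.maximalIdeal R := by
    rw [hI, Ideal.span_le]; rintro _ ⟨i, rfl⟩; exact hxm i
  have hnt : Nontrivial (LinearMap.ker f ⧸ (Ideal.ofList rs • ⊤ : Submodule R (LinearMap.ker f))) := by
    rw [Submodule.Quotient.nontrivial_iff]
    intro htop
    have := Submodule.eq_bot_of_le_smul_of_le_jacobson_bot (Ideal.ofList rs)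
      (⊤ : Submodule R (LinearMap.ker f)) Module.Finite.fg_top htop.ge
      (hIm.trans (IsLocalRing.jacobson_eq_maximalIdeal ⊥ bot_ne_top).ge)
    apply hL
    rw [eq_bot_iff]
    intro c hc
    have h2 : (⟨c, hc⟩ : LinearMap.ker f) ∈ (⊥ : Submodule R (LinearMap.ker f)) := this ▸ trivial
    simpa using h2
  have hkill : ∀ a ∈ IsLocalRing.maximalIdeal R,
      ∀ v : (LinearMap.ker f ⧸ (Ideal.ofList rs • ⊤ : Submodule R (LinearMap.ker f))), a • v = 0 := by
    intro a ha v
    obtain ⟨l, rfl⟩ := Submodule.Quotient.mk_surjective _ v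
    apply hf'
    rw [map_smul, hmk, map_zero, ← Submodule.Quotient.mk_smul, Submodule.Quotient.mk_eq_zero]
    rw [pi_eq_sum_univ' (a • (LinearMap.ker f).subtype l)]
    refine Submodule.sum_mem _ fun i _ => Submodule.smul_mem_smul ?_ trivial
    have h1 : a * l.1 i ∈ IsLocalRing.maximalIdeal R ^ 2 := by
      rw [pow_two]; exact Ideal.mul_mem_mul ha (hfm l.1 l.2 i)
    rw [← hmin] at h1
    have h2 : a * l.1 i ∈ Ideal.span (Set.range x) := by
      have h3 : Ideal.span (Set.range x) * IsLocalRing.maximalIdeal R ≤ Ideal.span (Set.range x) :=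
        Ideal.mul_le_left
      exact h3 h1
    rw [← hI] at h2
    exact h2
  have hEk := fun (i : ℕ) (hi : d < i) => ext_residue _ hkill (ModuleCat.of R R) i (hEL i hi)
  have := inj_dim_of_cyclic d (ModuleCat.of R R) (ext_cyclic_vanish d _ hEk)
  intro N i hi
  obtain ⟨i, rfl⟩ : ∃ j, i = j + 1 := ⟨i - 1, by omega⟩
  exact (bridge _ _ i).2 (HasInjectiveDimensionLT.subsingleton _ (d+1) (i+1) (by omega) N)
end

section
/- Let (R,m) be a non-Gorenstein Noetherian local ring with m³ = (0) and m² ≠ (0), which possesses a nonfree finitely generated module of G-dimension zero. Then m² = (0 :_R m), i.e., the socle of R equals m². -/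
open CategoryTheory

/-! ### Comparison of the two versions of `Ext` -/


lemma old_ext_iff {R : Type} [CommRing R] {X : ModuleCat R} (P : ProjectiveResolution X)
    (Y : ModuleCat R) (n : ℕ) :
    Subsingleton (((Ext R (ModuleCat R) (n+1)).obj (Opposite.op X)).obj Y) ↔
      ∀ f : P.complex.X (n+1) ⟶ Y, P.complex.d (n+2) (n+1) ≫ f = 0 →
        ∃ g : P.complex.X n ⟶ Y, P.complex.d (n+1) n ≫ g = f := by
  rw [← ModuleCat.isZero_iff_subsingleton, (P.isoExt (n+1) Y).isZero_iff,
    ← HomologicalComplex.exactAt_iff_isZero_homology,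
    HomologicalComplex.exactAt_iff' _ n (n+1) (n+2) (by simp) (by simp),
    ShortComplex.moduleCat_exact_iff]
  rfl

lemma new_ext_iff {R : Type} [CommRing R] {X : ModuleCat R} (P : ProjectiveResolution X)
    (Y : ModuleCat R) (n : ℕ) :
    Subsingleton (Abelian.Ext X Y (n+1)) ↔
      ∀ f : P.complex.X (n+1) ⟶ Y, P.complex.d (n+2) (n+1) ≫ f = 0 →
        ∃ g : P.complex.X n ⟶ Y, P.complex.d (n+1) n ≫ g = f := by
  constructor
  · intro h f hf
    exact (P.extMk_eq_zero_iff f (n+2) rfl hf n rfl).1 (Subsingleton.elim _ _)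
  · intro h
    refine subsingleton_of_forall_eq 0 fun a => ?_
    obtain ⟨f, hf, rfl⟩ := P.extMk_surjective a (n+2) rfl
    exact (P.extMk_eq_zero_iff f (n+2) rfl hf n rfl).2 (h f hf)

lemma ext_compare {R : Type} [CommRing R] (X Y : ModuleCat R) (n : ℕ) :
    Subsingleton (((_root_.Ext R (ModuleCat R) (n+1)).obj (Opposite.op X)).obj Y) ↔
      Subsingleton (Abelian.Ext X Y (n+1)) :=
  (old_ext_iff (projectiveResolution X) Y n).trans
    (new_ext_iff (projectiveResolution X) Y n).symm

/-! ### If `Ext¹(k, R) = 0` and `m³ = 0` then `R` is Gorenstein -/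

lemma ext_one_retract {R : Type} [CommRing R] {X N Y : ModuleCat R} (i : X ⟶ N) (r : N ⟶ X)
    (hir : i ≫ r = 𝟙 X) (h : Subsingleton (Abelian.Ext N Y 1)) :
    Subsingleton (Abelian.Ext X Y 1) := by
  refine subsingleton_of_forall_eq 0 fun a => ?_
  have h1 : (Abelian.Ext.mk₀ r).comp a (zero_add 1) = 0 := Subsingleton.elim _ _
  have h2 : a = (Abelian.Ext.mk₀ i).comp ((Abelian.Ext.mk₀ r).comp a (zero_add 1))
      (zero_add 1) := by
    rw [Abelian.Ext.mk₀_comp_mk₀_assoc, hir, Abelian.Ext.mk₀_id_comp]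
  rw [h2, h1, Abelian.Ext.comp_zero]

lemma ext_one_finite {R : Type} [CommRing R] [IsNoetherianRing R] [IsLocalRing R]
    (hm3 : (IsLocalRing.maximalIdeal R) ^ 3 = ⊥)
    (hk : Subsingleton (Abelian.Ext (ModuleCat.of R (R ⧸ IsLocalRing.maximalIdeal R))
      (ModuleCat.of R R) 1)) (M : Type) [AddCommGroup M] [Module R M] (hM : Module.Finite R M) :
    Subsingleton (Abelian.Ext (ModuleCat.of R M) (ModuleCat.of R R) 1) := by
  induction hM using IsNoetherianRing.induction_on_isQuotientEquivQuotientPrime R with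
  | subsingleton N =>
    refine subsingleton_of_forall_eq 0 fun a => Abelian.Ext.eq_zero_of_projective _
  | quotient N p f =>
    have hp : p.1 = IsLocalRing.maximalIdeal R := by
      refine le_antisymm (IsLocalRing.le_maximalIdeal p.2.ne_top) ?_
      exact p.2.le_of_pow_le (n := 3) (by rw [hm3]; exact bot_le)
    rw [hp] at f
    refine ext_one_retract (ModuleCat.ofHom f.toLinearMap) (ModuleCat.ofHom f.symm.toLinearMap)
      ?_ hk
    ext x
    simp
  | exact N₁ N₂ N₃ f g hf hg hfg h₁ h₃ =>
    have hS := ModuleCat.shortComplex_shortExact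
      (ModuleCat.shortComplexOfCompEqZero f g hfg.linearMap_comp_eq_zero) hfg hf hg
    refine subsingleton_of_forall_eq 0 fun a => ?_
    obtain ⟨b, hb⟩ := Abelian.Ext.contravariant_sequence_exact₂ hS (ModuleCat.of R R) a
      (h₁.elim _ _)
    rw [← hb, h₃.elim b 0, Abelian.Ext.comp_zero]

lemma baer_of_ext {R : Type} [CommRing R]
    (h : ∀ I : Ideal R, Subsingleton (Abelian.Ext (ModuleCat.of R (R ⧸ I))
      (ModuleCat.of R R) 1)) : Module.Baer R R := by
  intro I g
  have hS := ModuleCat.shortComplex_shortExact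
      (ModuleCat.shortComplexOfCompEqZero (Submodule.subtype I) (Submodule.mkQ I)
        (LinearMap.exact_subtype_mkQ I).linearMap_comp_eq_zero)
      (LinearMap.exact_subtype_mkQ I) I.injective_subtype I.mkQ_surjective
  obtain ⟨b, hb⟩ := Abelian.Ext.contravariant_sequence_exact₁ hS (ModuleCat.of R R)
    (Abelian.Ext.mk₀ (ModuleCat.ofHom g)) (n₁ := 1) rfl ((h I).elim _ _)
  obtain ⟨b, rfl⟩ := (Abelian.Ext.mk₀_bijective _ _).2 b
  rw [Abelian.Ext.mk₀_comp_mk₀] at hb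
  replace hb := (Abelian.Ext.mk₀_bijective _ _).1 hb
  refine ⟨b.hom, fun x hx => ?_⟩
  exact congrArg (fun t => t.hom ⟨x, hx⟩) hb

lemma gorenstein_of_ext {R : Type} [CommRing R] [IsNoetherianRing R] [IsLocalRing R]
    (hm3 : (IsLocalRing.maximalIdeal R) ^ 3 = ⊥)
    (hk : Subsingleton (Abelian.Ext (ModuleCat.of R (R ⧸ IsLocalRing.maximalIdeal R))
      (ModuleCat.of R R) 1)) : IsGorensteinLocalRing R := by
  refine ⟨inferInstance, inferInstance, 0, fun N i hi => ?_⟩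
  have hB : Module.Baer R R := baer_of_ext fun I => ext_one_finite hm3 hk _ inferInstance
  have hJ : Module.Injective R R := hB.injective
  have : Injective (ModuleCat.of R R) := Module.injective_object_of_injective_module R R
  obtain ⟨n, rfl⟩ : ∃ n, i = n + 1 := ⟨i - 1, by omega⟩
  rw [ext_compare]
  exact subsingleton_of_forall_eq 0 fun a => Abelian.Ext.eq_zero_of_injective _

/-! ### The module theory -/

lemma free_of_dual {R : Type} [CommRing R] [IsNoetherianRing R] [IsLocalRing R]
    (M : Type) [AddCommGroup M] [Module R M] [Module.Finite R M]
    (h : ∀ e : M, (∀ f : Module.Dual R M, f e ∈ IsLocalRing.maximalIdeal R) →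
      e ∈ (IsLocalRing.maximalIdeal R) • (⊤ : Submodule R M)) : Module.Free R M := by
  obtain ⟨n, s, hs⟩ := Module.Finite.exists_fin (R := R) (M := Module.Dual R M)
  let g : M →ₗ[R] (Fin n → R) := LinearMap.pi s
  have hinj : Function.Injective (g.lTensor (IsLocalRing.ResidueField R)) := by
    rw [injective_iff_map_eq_zero]
    intro t ht
    obtain ⟨e, rfl⟩ := TensorProduct.mk_surjective R M (IsLocalRing.ResidueField R)
      Ideal.Quotient.mk_surjective t
    have key : ∀ i, s i e ∈ IsLocalRing.maximalIdeal R := by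
      intro i
      have := congrArg (fun u => TensorProduct.rid R (IsLocalRing.ResidueField R)
        ((LinearMap.proj (R := R) (φ := fun _ : Fin n => R) i).lTensor
          (IsLocalRing.ResidueField R) u)) ht
      simp [g, Algebra.smul_def] at this
      simpa using this
    have he : e ∈ (IsLocalRing.maximalIdeal R) • (⊤ : Submodule R M) := by
      refine h e fun f => ?_
      have hf : f ∈ Submodule.span R (Set.range s) := hs ▸ Submodule.mem_top
      induction hf using Submodule.span_induction with
      | mem x hx => obtain ⟨i, rfl⟩ := hx; exact key i
      | zero => simp
      | add x y _ _ hx hy => simpa using add_mem hx hy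
      | smul a x _ hx => simpa using Ideal.mul_mem_left _ a hx
    refine Submodule.smul_induction_on he ?_ ?_
    · intro r hr m _
      have hr0 : algebraMap R (IsLocalRing.ResidueField R) r = 0 := by simpa using hr
      rw [TensorProduct.mk_apply, TensorProduct.tmul_smul, TensorProduct.smul_tmul',
        Algebra.smul_def, hr0]
      simp
    · intro a b ha hb
      rw [map_add, ha, hb, add_zero]
  obtain ⟨l, hl⟩ := (IsLocalRing.split_injective_iff_lTensor_residueField_injective g).2 hinj
  have : Module.Projective R M := Module.Projective.of_split g l hl
  exact Module.free_of_flat_of_isLocalRing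

/-- A minimal cover. -/
lemma exists_minimal_cover {R : Type} [CommRing R] [IsLocalRing R]
    (M : Type) [AddCommGroup M] [Module R M] [Module.Finite R M] :
    ∃ (ι : Type) (π : (ι →₀ R) →ₗ[R] M), Function.Surjective π ∧
      ∀ v, π v = 0 → ∀ i, v i ∈ IsLocalRing.maximalIdeal R := by
  let k := IsLocalRing.ResidueField R
  let b := Module.Free.chooseBasis k (TensorProduct R k M)
  choose f hf using fun i => TensorProduct.mk_surjective R M k Ideal.Quotient.mk_surjective (b i)
  refine ⟨_, Finsupp.linearCombination R f, ?_, ?_⟩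
  · rw [← LinearMap.range_eq_top, Finsupp.range_linearCombination]
    exact IsLocalRing.span_eq_top_of_tmul_eq_basis f b hf
  · intro v hv i
    have h1 := congrArg (TensorProduct.mk R k M 1) hv
    rw [Finsupp.linearCombination_apply, Finsupp.sum, map_sum, map_zero] at h1
    have h2 : ∑ i ∈ v.support, (algebraMap R k (v i)) • b i = 0 := by
      rw [← h1]
      refine Finset.sum_congr rfl fun j _ => ?_
      rw [map_smul, hf, algebraMap_smul]
    have h3 := linearIndependent_iff'.1 b.linearIndependent v.support _ h2
    by_cases hi : i ∈ v.support
    · simpa [k] using h3 i hi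
    · rw [Finsupp.notMem_support_iff.1 hi]; exact zero_mem _

lemma exists_functional {R : Type} [CommRing R] [IsLocalRing R]
    (y : IsLocalRing.maximalIdeal R) (hy : (y : R) ∉ (IsLocalRing.maximalIdeal R) ^ 2) :
    ∃ φ : IsLocalRing.maximalIdeal R →ₗ[R] (R ⧸ IsLocalRing.maximalIdeal R), φ y = 1 := by
  let k := IsLocalRing.ResidueField R
  let c : IsLocalRing.CotangentSpace R := (IsLocalRing.maximalIdeal R).toCotangent y
  have hc : c ≠ 0 := fun h => hy (((IsLocalRing.maximalIdeal R).toCotangent_eq_zero y).1 h)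
  obtain ⟨f, hf⟩ : ∃ f : Module.Dual k (IsLocalRing.CotangentSpace R), f c ≠ 0 := by
    by_contra! h
    exact hc ((Module.forall_dual_apply_eq_zero_iff k c).1 h)
  refine ⟨(((f c)⁻¹ • f).restrictScalars R).comp (IsLocalRing.maximalIdeal R).toCotangent, ?_⟩
  exact inv_mul_cancel₀ hf

lemma main_ext {R : Type} [CommRing R] [IsNoetherianRing R] [IsLocalRing R]
    (M : Type) [AddCommGroup M] [Module R M] [Module.Finite R M]
    (hinj : Function.Injective (Module.Dual.eval R M))
    (hext : Subsingleton (Abelian.Ext (ModuleCat.of R M) (ModuleCat.of R R) 2))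
    (hfree : ¬ Module.Free R M) (x : R) (hx : x ∈ IsLocalRing.maximalIdeal R)
    (hx2 : x ∉ (IsLocalRing.maximalIdeal R) ^ 2)
    (hxs : ∀ a ∈ IsLocalRing.maximalIdeal R, a * x = 0) :
    Subsingleton (Abelian.Ext (ModuleCat.of R (R ⧸ IsLocalRing.maximalIdeal R))
      (ModuleCat.of R R) 1) := by
  obtain ⟨e, he, heM⟩ : ∃ e : M, (∀ f : Module.Dual R M, f e ∈ IsLocalRing.maximalIdeal R) ∧
      e ∉ (IsLocalRing.maximalIdeal R) • (⊤ : Submodule R M) := by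
    by_contra! h
    exact hfree (free_of_dual M h)
  have hxe : x • e = 0 := by
    apply hinj
    ext f
    simp [mul_comm x, hxs _ (he f)]
  obtain ⟨ι, π, hπ, hmin⟩ := exists_minimal_cover (R := R) M
  obtain ⟨p, rfl⟩ := hπ e
  obtain ⟨i, hi⟩ : ∃ i, p i ∉ IsLocalRing.maximalIdeal R := by
    by_contra! h
    apply heM
    rw [← p.sum_single, Finsupp.sum, map_sum]
    refine Submodule.sum_mem _ fun j _ => ?_
    rw [← mul_one (p j), ← smul_eq_mul, ← Finsupp.smul_single, map_smul]
    exact Submodule.smul_mem_smul (h j) Submodule.mem_top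
  have hu : IsUnit (p i) := by simpa using hi
  -- the kernel has vanishing `Ext¹`
  have hS := LinearMap.shortExact_shortComplexKer hπ
  have hN : Subsingleton (Abelian.Ext (ModuleCat.of R (LinearMap.ker π)) (ModuleCat.of R R) 1) := by
    have : Projective (ModuleCat.of R (ι →₀ R)) := ModuleCat.projective_of_free Finsupp.basisSingleOne
    refine subsingleton_of_forall_eq 0 fun a => ?_
    obtain ⟨b, hb⟩ := Abelian.Ext.contravariant_sequence_exact₁ hS (ModuleCat.of R R) a
      (n₁ := 2) rfl (hext.elim _ _)
    rw [← hb, Abelian.Ext.eq_zero_of_projective b, Abelian.Ext.comp_zero]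
  let y : IsLocalRing.maximalIdeal R := ⟨x * p i, Ideal.mul_mem_right _ _ hx⟩
  obtain ⟨φ, hφ⟩ := exists_functional y (by
    intro h
    exact hx2 ((Ideal.mul_unit_mem_iff_mem _ hu).1 h))
  let n : LinearMap.ker π := ⟨x • p, by simpa using hxe⟩
  let q : LinearMap.ker π →ₗ[R] IsLocalRing.maximalIdeal R :=
    ((Finsupp.lapply i).comp (LinearMap.ker π).subtype).codRestrict _
      (fun v => hmin v.1 v.2 i)
  let s : (R ⧸ IsLocalRing.maximalIdeal R) →ₗ[R] LinearMap.ker π :=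
    Submodule.liftQ _ (LinearMap.toSpanSingleton R _ n) (by
      intro a ha
      rw [LinearMap.mem_ker, LinearMap.toSpanSingleton_apply]
      apply Subtype.ext
      change a • (x • p) = 0
      rw [smul_smul, hxs a ha, zero_smul])
  refine ext_one_retract (ModuleCat.ofHom s) (ModuleCat.ofHom (φ.comp q)) ?_ hN
  have hqn : q n = y := rfl
  have hcomp : (φ.comp q).comp s = LinearMap.id := by
    apply Submodule.linearMap_qext
    ext
    change φ (q ((1 : R) • n)) = 1
    rw [one_smul, hqn, hφ]
  rw [← ModuleCat.ofHom_comp, hcomp]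
  rfl

/-- the socle of R equals m². -/
theorem stmt_4 (R : Type) [CommRing R] [IsNoetherianRing R] [IsLocalRing R]
    (hng : ¬ IsGorensteinLocalRing R)
    (hm3 : (IsLocalRing.maximalIdeal R) ^ 3 = ⊥)
    (hm2 : (IsLocalRing.maximalIdeal R) ^ 2 ≠ ⊥)
    (hex : ∃ M : ModuleCat R, Module.Finite R M ∧ GDimZero R M ∧ ¬ Module.Free R M) :
    (⊥ : Submodule R R).colon (IsLocalRing.maximalIdeal R) =
      (IsLocalRing.maximalIdeal R) ^ 2 := by
  have hle : (IsLocalRing.maximalIdeal R) ^ 2 ≤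
      (⊥ : Submodule R R).colon (IsLocalRing.maximalIdeal R) := by
    intro a ha
    rw [Submodule.mem_colon]
    intro b hb
    rw [← hm3, pow_succ]
    exact Ideal.mul_mem_mul ha hb
  refine le_antisymm ?_ hle
  intro x hx
  by_contra hx2
  have hxs : ∀ a ∈ IsLocalRing.maximalIdeal R, a * x = 0 := by
    intro a ha
    have := Submodule.mem_colon.1 hx a ha
    rw [mul_comm]
    simpa using this
  have hxm : x ∈ IsLocalRing.maximalIdeal R := by
    by_contra h
    have hu : IsUnit x := by simpa using h
    apply hm2
    have : IsLocalRing.maximalIdeal R = ⊥ := by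
      rw [eq_bot_iff]
      intro a ha
      exact hu.mul_left_eq_zero.1 (hxs a ha)
    rw [this]
    simp
  obtain ⟨M, hfin, ⟨hbij, hext, -⟩, hfree⟩ := hex
  exact hng (gorenstein_of_ext hm3 (main_ext M hbij.1
    ((ext_compare (ModuleCat.of R M) (ModuleCat.of R R) 1).1 (hext 2 (by norm_num)))
    hfree x hxm hx2 hxs))
end

section
/- Let (R,m) be a non-Gorenstein Noetherian local ring with m³ = (0), m² ≠ (0), and residue field k, of type r = dim_k Hom_R(k,R). If there exists a nonfree finitely generated R-module of G-dimension zero, then dim_k m/m² = r + 1 and dim_k m² = r; equivalently the Hilbert series of R is (1+t)(1+rt). -/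
open CategoryTheory

/-- An indecomposable (nonzero) module: it is not a direct sum of two proper submodules. -/
def IsIndecomposableModule (R : Type) [CommRing R] (M : Type) [AddCommGroup M]
    [Module R M] : Prop :=
  (⊥ : Submodule R M) ≠ ⊤ ∧
    ∀ N₁ N₂ : Submodule R M, IsCompl N₁ N₂ → N₁ = ⊥ ∨ N₂ = ⊥

/-- the type of a local ring: length of Hom(k, R) -/
noncomputable def typeLen (R : Type) [CommRing R] [IsLocalRing R] : WithBot ℕ∞ :=
  mlength R ((R ⧸ IsLocalRing.maximalIdeal R) →ₗ[R] R)


lemma extPres (R : Type) [CommRing R] (M : Type) [AddCommGroup M] [Module R M]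
    (h : Subsingleton (ExtGrp R M R 1)) :
    ∃ G : ModuleCat.{0} R, Module.Projective R G ∧ ∃ q : G →ₗ[R] M, Function.Surjective q ∧
      ∀ φ : LinearMap.ker q →ₗ[R] R, ∃ ψ : G →ₗ[R] R, ∀ x : LinearMap.ker q, ψ x = φ x := by
  let P := projectiveResolution (ModuleCat.of R M)
  have hz : Limits.IsZero ((P.complex.linearYonedaObj R (ModuleCat.of R R)).homology 1) :=
    Limits.IsZero.of_iso (@ModuleCat.isZero_of_subsingleton R _ _ h)
      (P.isoExt 1 (ModuleCat.of R R)).symm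
  rw [← HomologicalComplex.exactAt_iff_isZero_homology,
    HomologicalComplex.exactAt_iff' _ 0 1 2 (by simp) (by simp),
    ShortComplex.moduleCat_exact_iff] at hz
  have hex : (ShortComplex.mk (P.complex.d 1 0) (P.π.f 0)
      P.complex_d_comp_π_f_zero).Exact := P.exact₀
  rw [ShortComplex.moduleCat_exact_iff] at hex
  have hepi : Epi (P.π.f 0) := inferInstance
  rw [ModuleCat.epi_iff_surjective] at hepi
  refine ⟨P.complex.X 0, (IsProjective.iff_projective _).mpr (P.projective 0),
    (P.π.f 0).hom, hepi, fun φ => ?_⟩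
  have hmem : ∀ y, (P.complex.d 1 0).hom y ∈ LinearMap.ker (P.π.f 0).hom := fun y => by
    rw [LinearMap.mem_ker, ← LinearMap.comp_apply, ← ModuleCat.hom_comp,
      P.complex_d_comp_π_f_zero]; rfl
  let g : P.complex.X 1 ⟶ ModuleCat.of R R :=
    ModuleCat.ofHom (φ ∘ₗ LinearMap.codRestrict _ (P.complex.d 1 0).hom hmem)
  obtain ⟨ψ, hψ⟩ := hz g (by
    change P.complex.d 2 1 ≫ g = 0
    ext y
    change φ _ = 0
    convert φ.map_zero
    ext
    change (P.complex.d 1 0).hom ((P.complex.d 2 1).hom y) = 0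
    rw [← LinearMap.comp_apply, ← ModuleCat.hom_comp, P.complex.d_comp_d]; rfl)
  change (P.complex.X 0 ⟶ ModuleCat.of R R) at ψ
  change P.complex.d 1 0 ≫ ψ = g at hψ
  refine ⟨ψ.hom, fun x => ?_⟩
  obtain ⟨y, hy⟩ := hex x.1 x.2
  have := congrArg (fun t => t.hom y) hψ
  change ψ.hom ((P.complex.d 1 0).hom y) = φ ⟨(P.complex.d 1 0).hom y, hmem y⟩ at this
  have hy' : (P.complex.d 1 0).hom y = x.1 := hy
  exact (congrArg ψ.hom hy').symm.trans (this.trans (congrArg φ (Subtype.ext hy')))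

lemma gor_of_inj (R : Type) [CommRing R] [IsNoetherianRing R] [IsLocalRing R]
    (h : Module.Baer R R) : IsGorensteinLocalRing R := by
  refine ⟨inferInstance, inferInstance, 0, fun N i hi => ?_⟩
  obtain ⟨n, rfl⟩ : ∃ n, i = n + 1 := ⟨i - 1, by omega⟩
  have : Module.Injective R R := h.injective
  have hinj : Injective (ModuleCat.of R R) := Module.injective_object_of_injective_module R R
  let P := projectiveResolution N
  suffices hz : Limits.IsZero ((P.complex.linearYonedaObj R (ModuleCat.of R R)).homology (n+1)) by
    exact ModuleCat.subsingleton_of_isZero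
      (Limits.IsZero.of_iso hz (P.isoExt (n+1) (ModuleCat.of R R)))
  rw [← HomologicalComplex.exactAt_iff_isZero_homology,
    HomologicalComplex.exactAt_iff' _ n (n+1) (n+2) (by simp) (by simp),
    ShortComplex.moduleCat_exact_iff]
  intro g hg
  change (P.complex.X (n+1) ⟶ ModuleCat.of R R) at g
  change P.complex.d (n+2) (n+1) ≫ g = 0 at hg
  exact ⟨(P.exact_succ n).descToInjective g hg, (P.exact_succ n).comp_descToInjective g hg⟩

/-- Every functional on the kernel of a projective presentation extends. -/
def ExtendProp (R : Type) [CommRing R] (M : Type) [AddCommGroup M] [Module R M] : Prop :=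
  ∀ (F : Type) [AddCommGroup F] [Module R F] [Module.Projective R F] (p : F →ₗ[R] M),
    Function.Surjective p → ∀ φ : LinearMap.ker p →ₗ[R] R,
      ∃ ψ : F →ₗ[R] R, ∀ x : LinearMap.ker p, ψ x = φ x

lemma extendProp_of_retract {R : Type} [CommRing R] {M K G : Type} [AddCommGroup M] [Module R M]
    [AddCommGroup K] [Module R K] [AddCommGroup G] [Module R G] [Module.Projective R G]
    (q : G →ₗ[R] M) (hq : Function.Surjective q)
    (h : ∀ φ : LinearMap.ker q →ₗ[R] R, ∃ ψ : G →ₗ[R] R, ∀ x : LinearMap.ker q, ψ x = φ x)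
    (s : K →ₗ[R] M) (t : M →ₗ[R] K) (hts : ∀ x, t (s x) = x) : ExtendProp R K := by
  intro F _ _ _ p hp φ
  obtain ⟨β, hβ⟩ := Module.projective_lifting_property q (s ∘ₗ p) hq
  obtain ⟨α, hα⟩ := Module.projective_lifting_property p (t ∘ₗ q) hp
  have hβ' : ∀ x, q (β x) = s (p x) := fun x => LinearMap.congr_fun hβ x
  have hα' : ∀ x, p (α x) = t (q x) := fun x => LinearMap.congr_fun hα x
  let α' : LinearMap.ker q →ₗ[R] LinearMap.ker p :=
    LinearMap.codRestrict _ (α ∘ₗ (LinearMap.ker q).subtype) (fun x => by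
      simp [hα'])
  let δ : F →ₗ[R] LinearMap.ker p :=
    LinearMap.codRestrict _ (α ∘ₗ β - LinearMap.id) (fun x => by
      simp [hα', hβ', hts])
  obtain ⟨ψ, hψ⟩ := h (φ ∘ₗ α')
  refine ⟨ψ ∘ₗ β - φ ∘ₗ δ, fun x => ?_⟩
  have hx : β x.1 ∈ LinearMap.ker q := by
    rw [LinearMap.mem_ker, hβ', x.2, map_zero]
  have h1 := hψ ⟨β x.1, hx⟩
  have h2 : α' ⟨β x.1, hx⟩ = δ x.1 + x := by
    ext; simp [α', δ]; rfl
  simp only [LinearMap.comp_apply, h2, map_add] at h1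
  simp only [LinearMap.sub_apply, LinearMap.comp_apply]
  rw [h1]; abel

lemma ExtendProp.retract {R : Type} [CommRing R] {M K : Type} [AddCommGroup M] [Module R M]
    [AddCommGroup K] [Module R K] (h : ExtendProp R M)
    (s : K →ₗ[R] M) (t : M →ₗ[R] K) (hts : ∀ x, t (s x) = x) : ExtendProp R K :=
  extendProp_of_retract (G := M →₀ R) (Finsupp.linearCombination R id)
    (Finsupp.linearCombination_id_surjective R M) (h _ _ (Finsupp.linearCombination_id_surjective R M)) s t hts

lemma extendProp_of_ext {R : Type} [CommRing R] {M : Type} [AddCommGroup M] [Module R M]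
    (h : Subsingleton (ExtGrp R M R 1)) : ExtendProp R M := by
  obtain ⟨G, hG, q, hq, h'⟩ := extPres R M h
  exact extendProp_of_retract q hq h' LinearMap.id LinearMap.id (fun _ => rfl)

/-- A self-dual short exact sequence. -/
structure GoodSeq (R : Type) [CommRing R] [IsLocalRing R] (A F B : Type)
    [AddCommGroup A] [Module R A] [AddCommGroup F] [Module R F] [AddCommGroup B] [Module R B]
    (i : A →ₗ[R] F) (p : F →ₗ[R] B) : Prop where
  inj : Function.Injective i
  surj : Function.Surjective p
  exact : Function.Exact i p
  dsurj : Function.Surjective i.dualMap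
  reflA : Module.IsReflexive R A
  reflB : Module.IsReflexive R B
  killA : ∀ a ∈ (IsLocalRing.maximalIdeal R) ^ 2, ∀ x : A, a • x = 0
  killB : ∀ a ∈ (IsLocalRing.maximalIdeal R) ^ 2, ∀ x : B, a • x = 0

lemma GoodSeq.dual {R : Type} [CommRing R] [IsLocalRing R] {A F B : Type}
    [AddCommGroup A] [Module R A] [AddCommGroup F] [Module R F] [AddCommGroup B] [Module R B]
    {i : A →ₗ[R] F} {p : F →ₗ[R] B} (h : GoodSeq R A F B i p) :
    GoodSeq R (Module.Dual R B) (Module.Dual R F) (Module.Dual R A) p.dualMap i.dualMap := by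
  obtain ⟨inj, surj, ex, dsurj, reflA, reflB, killA, killB⟩ := h
  refine ⟨LinearMap.dualMap_injective_of_surjective surj, dsurj, ?_, ?_, inferInstance,
    inferInstance, ?_, ?_⟩
  · intro f
    constructor
    · intro hf
      have hle : LinearMap.ker p ≤ LinearMap.ker f := by
        intro x hx
        obtain ⟨a, rfl⟩ := (ex x).1 hx
        exact LinearMap.congr_fun hf a
      obtain ⟨s, hs⟩ := surj.hasRightInverse
      refine ⟨(LinearMap.ker p).liftQ f hle ∘ₗ (p.quotKerEquivOfSurjective surj).symm.toLinearMap, ?_⟩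
      ext x
      have : (p.quotKerEquivOfSurjective surj).symm (p x) = (LinearMap.ker p).mkQ x := by
        rw [LinearEquiv.symm_apply_eq]; rfl
      simp [this]
    · rintro ⟨g, rfl⟩
      ext a
      have : p (i a) = 0 := (ex (i a)).2 ⟨a, rfl⟩
      simp [this]
  · intro ξ
    obtain ⟨b, rfl⟩ := (Module.bijective_dual_eval R B).2 ξ
    obtain ⟨x, rfl⟩ := surj b
    exact ⟨Module.Dual.eval R F x, rfl⟩
  · intro a ha f
    ext x
    rw [LinearMap.smul_apply, ← map_smul, killB a ha, map_zero]; rfl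
  · intro a ha f
    ext x
    rw [LinearMap.smul_apply, ← map_smul, killA a ha, map_zero]; rfl

lemma goodSeq_of_pres {R : Type} [CommRing R] [IsLocalRing R] {F B : Type}
    [AddCommGroup F] [Module R F] [AddCommGroup B] [Module R B] [Module.Free R F]
    [Module.Finite R F] [Module.IsReflexive R B]
    (hE : ExtendProp R B)
    (hm3 : (IsLocalRing.maximalIdeal R) ^ 3 = ⊥)
    (killB : ∀ a ∈ (IsLocalRing.maximalIdeal R) ^ 2, ∀ x : B, a • x = 0)
    (p : F →ₗ[R] B) (hp : Function.Surjective p)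
    (hk : LinearMap.ker p ≤ IsLocalRing.maximalIdeal R • ⊤) :
    GoodSeq R (LinearMap.ker p) F B (LinearMap.ker p).subtype p := by
  have ds : Function.Surjective (LinearMap.ker p).subtype.dualMap := by
    intro φ
    obtain ⟨ψ, hψ⟩ := hE F p hp φ
    exact ⟨ψ, LinearMap.ext hψ⟩
  refine ⟨Subtype.val_injective, hp, ?_, ds, ⟨?_, ?_⟩, inferInstance, ?_, killB⟩
  · intro x; simp
  · intro x y hxy
    apply Subtype.ext
    apply (Module.bijective_dual_eval R F).1
    ext f
    exact LinearMap.congr_fun hxy (f ∘ₗ (LinearMap.ker p).subtype)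
  · intro ξ
    obtain ⟨y, hy⟩ := (Module.bijective_dual_eval R F).2 ((LinearMap.ker p).subtype.dualMap.dualMap ξ)
    have hpy : p y = 0 := by
      apply (Module.bijective_dual_eval R B).1
      ext f
      have := LinearMap.congr_fun hy (f ∘ₗ p)
      simp only [Module.Dual.eval_apply, LinearMap.comp_apply, LinearMap.dualMap_apply] at this
      rw [Module.Dual.eval_apply, this]
      have h0 : (LinearMap.ker p).subtype.dualMap (f ∘ₗ p) = 0 := by
        ext z; simp [LinearMap.dualMap_apply]
      rw [h0]; simp
    refine ⟨⟨y, hpy⟩, ?_⟩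
    ext g
    obtain ⟨f, rfl⟩ := ds g
    exact LinearMap.congr_fun hy f
  · intro a ha x
    apply Subtype.ext
    have : a • x.1 ∈ (IsLocalRing.maximalIdeal R) ^ 2 • IsLocalRing.maximalIdeal R • (⊤ : Submodule R F) :=
      Submodule.smul_mem_smul ha (hk x.2)
    rw [← Submodule.mul_smul, ← pow_succ, hm3] at this
    simpa using this
set_option linter.all false

open IsLocalRing in
lemma artin {R : Type} [CommRing R] [IsNoetherianRing R] [IsLocalRing R]
    (hm3 : (maximalIdeal R) ^ 3 = ⊥) : IsArtinianRing R := by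
  rw [isArtinianRing_iff_isNilpotent_maximalIdeal]
  exact ⟨3, hm3⟩

/-- Natural number valued length. -/
noncomputable def len (R : Type) [CommRing R] (M : Type) [AddCommGroup M] [Module R M] : ℕ :=
  (Module.length R M).toNat

section
variable {R : Type} [CommRing R]
variable {M N P : Type} [AddCommGroup M] [Module R M] [AddCommGroup N] [Module R N]
  [AddCommGroup P] [Module R P]

lemma len_congr (e : M ≃ₗ[R] N) : len R M = len R N := by
  rw [len, len, e.length_eq]

variable [IsArtinianRing R]

lemma coe_len [Module.Finite R M] : (len R M : ℕ∞) = Module.length R M :=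
  ENat.natCast_toNat Module.length_ne_top

lemma mlength_eq [Module.Finite R M] {n : ℕ} (h : len R M = n) : mlength R M = (n : ℕ∞) := by
  rw [mlength, ← Module.coe_length, ← coe_len, h]

lemma len_exact [Module.Finite R M] (f : N →ₗ[R] M) (g : M →ₗ[R] P) (hf : Function.Injective f)
    (hg : Function.Surjective g) (h : Function.Exact f g) : len R M = len R N + len R P := by
  have : Module.Finite R P := Module.Finite.of_surjective g hg
  have : Module.Finite R N := Module.Finite.of_injective f hf
  have := Module.length_eq_add_of_exact f g hf hg h
  rw [← coe_len, ← coe_len, ← coe_len] at this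
  exact_mod_cast this

lemma len_sub [Module.Finite R M] (N : Submodule R M) : len R M = len R N + len R (M ⧸ N) :=
  len_exact N.subtype N.mkQ Subtype.val_injective N.mkQ_surjective
    (by intro x; simp)

lemma len_le_of_inj [Module.Finite R M] (f : N →ₗ[R] M) (hf : Function.Injective f) :
    len R N ≤ len R M := by
  rw [len_sub (LinearMap.range f), len_congr (LinearEquiv.ofInjective f hf)]; omega

lemma len_eq_zero [Module.Finite R M] : len R M = 0 ↔ Subsingleton M := by
  rw [← Module.length_eq_zero_iff (R := R), ← coe_len]; simp

lemma sub_eq_top [Module.Finite R M] (N : Submodule R M) (h : len R M ≤ len R N) : N = ⊤ := by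
  have := len_sub N
  have h0 : len R (M ⧸ N) = 0 := by omega
  rw [len_eq_zero] at h0
  exact Submodule.Quotient.subsingleton_iff.1 h0

lemma sub_eq_of_le [Module.Finite R M] {N₁ N₂ : Submodule R M} (hle : N₁ ≤ N₂)
    (h : len R N₂ ≤ len R N₁) : N₁ = N₂ := by
  have h2 := sub_eq_top (N₁.comap N₂.subtype)
    (by rw [len_congr (Submodule.comapSubtypeEquivOfLe hle)]; exact h)
  refine le_antisymm hle (fun x hx => ?_)
  have : (⟨x, hx⟩ : N₂) ∈ N₁.comap N₂.subtype := by rw [h2]; trivial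
  exact this

lemma len_pi [Module.Finite R M] (n : ℕ) : len R (Fin n → M) = n * len R M := by
  have := Module.length_pi_of_fintype (R := R) (ι := Fin n) (fun _ => M)
  rw [← coe_len] at this
  simp only [← coe_len (R := R) (M := M)] at this
  have h2 : (len R (Fin n → M) : ℕ∞) = ((n * len R M : ℕ) : ℕ∞) := by
    rw [this]; simp
  exact_mod_cast h2

lemma len_free [Module.Free R M] [Module.Finite R M] [Nontrivial R] :
    len R M = Module.finrank R M * len R R := by
  rw [len_congr (Module.finBasis R M).equivFun, len_pi]

end

open IsLocalRing

/-- Minimal number of generators. -/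
noncomputable def bn (R : Type) [CommRing R] [IsLocalRing R] (M : Type) [AddCommGroup M]
    [Module R M] : ℕ := len R (M ⧸ (maximalIdeal R • (⊤ : Submodule R M)))

/-- The socle. -/
def soc (R : Type) [CommRing R] [IsLocalRing R] (M : Type) [AddCommGroup M]
    [Module R M] : Submodule R M where
  carrier := {x | ∀ a ∈ maximalIdeal R, a • x = 0}
  add_mem' hx hy a ha := by rw [smul_add, hx a ha, hy a ha, add_zero]
  zero_mem' a _ := smul_zero a
  smul_mem' c x hx a ha := by rw [smul_comm, hx a ha, smul_zero]

/-- The type. -/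
noncomputable def rk (R : Type) [CommRing R] [IsLocalRing R] : ℕ :=
  len R ((R ⧸ maximalIdeal R) →ₗ[R] R)

section
variable {R : Type} [CommRing R] [IsLocalRing R]
variable {M N P : Type} [AddCommGroup M] [Module R M] [AddCommGroup N] [Module R N]
  [AddCommGroup P] [Module R P]

lemma mem_soc {x : M} : x ∈ soc R M ↔ ∀ a ∈ maximalIdeal R, a • x = 0 := Iff.rfl

/-- The socle of isomorphic modules. -/
noncomputable def socEquiv (e : M ≃ₗ[R] N) : soc R M ≃ₗ[R] soc R N :=
  e.submoduleMap (soc R M) ≪≫ₗ LinearEquiv.ofEq _ _ (by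
    ext y
    constructor
    · rintro ⟨x, hx, rfl⟩ a ha
      change a • e x = 0
      rw [← map_smul, hx a ha, map_zero]
    · intro hy
      refine ⟨e.symm y, fun a ha => ?_, by simp⟩
      rw [← map_smul, hy a ha, map_zero])

lemma map_msmul (f : M →ₗ[R] N) (hf : Function.Surjective f) (I : Ideal R) :
    (I • (⊤ : Submodule R M)).map f = I • ⊤ := by
  rw [Submodule.map_smul'', Submodule.map_top, LinearMap.range_eq_top.2 hf]

lemma bn_congr (e : M ≃ₗ[R] N) : bn R M = bn R N :=
  len_congr (Submodule.Quotient.equiv _ _ e (map_msmul e.toLinearMap e.surjective _))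

lemma exists_basis (M : Type) [AddCommGroup M] [Module R M] [Module.Finite R M]
    (hM : ∀ a ∈ maximalIdeal R, ∀ x : M, a • x = 0) :
    ∃ n : ℕ, Nonempty (M ≃ₗ[R] (Fin n → R ⧸ maximalIdeal R)) := by
  letI : Field (R ⧸ maximalIdeal R) := Ideal.Quotient.field _
  have ht : Module.IsTorsionBySet R M (maximalIdeal R) := fun x a => hM a.1 a.2 x
  letI := ht.module
  haveI : IsScalarTower R (R ⧸ maximalIdeal R) M := ht.isScalarTower
  haveI : Module.Finite (R ⧸ maximalIdeal R) M := Module.Finite.of_restrictScalars_finite R _ _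
  exact ⟨_, ⟨(Module.finBasis (R ⧸ maximalIdeal R) M).equivFun.restrictScalars R⟩⟩

variable [IsArtinianRing R]

lemma len_k : len R (R ⧸ maximalIdeal R) = 1 := by
  have : IsSimpleModule R (R ⧸ maximalIdeal R) :=
    isSimpleModule_iff_isCoatom.mpr (Ideal.isMaximal_def.1 (maximalIdeal.isMaximal R))
  rw [len, Module.length_eq_one]; rfl

lemma len_hom_of_kill [Module.Finite R M] (hM : ∀ a ∈ maximalIdeal R, ∀ x : M, a • x = 0) :
    len R (M →ₗ[R] R) = rk R * len R M := by
  obtain ⟨n, ⟨e⟩⟩ := exists_basis M hM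
  rw [len_congr e, len_pi, len_k, len_congr (LinearEquiv.congrLeft R R e),
    ← len_congr (LinearMap.lsum R (fun _ : Fin n => R ⧸ maximalIdeal R) R (M := R)), len_pi, rk]
  ring

lemma kill_quot (a : R) (ha : a ∈ maximalIdeal R)
    (x : M ⧸ (maximalIdeal R • (⊤ : Submodule R M))) : a • x = 0 := by
  obtain ⟨y, rfl⟩ := Submodule.mkQ_surjective _ x
  rw [← map_smul, Submodule.mkQ_apply, Submodule.Quotient.mk_eq_zero]
  exact Submodule.smul_mem_smul ha trivial

lemma len_soc_dual [Module.Finite R M] : len R (soc R (Module.Dual R M)) = rk R * bn R M := by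
  rw [bn, ← len_hom_of_kill kill_quot]
  symm
  let S := maximalIdeal R • (⊤ : Submodule R M)
  let f : ((M ⧸ S) →ₗ[R] R) →ₗ[R] Module.Dual R M := S.mkQ.dualMap
  have hf : Function.Injective f := LinearMap.dualMap_injective_of_surjective S.mkQ_surjective
  refine len_congr ((LinearEquiv.ofInjective f hf) ≪≫ₗ LinearEquiv.ofEq _ _ ?_)
  ext g
  constructor
  · rintro ⟨φ, rfl⟩ a ha
    ext x
    change a • φ (S.mkQ x) = 0
    rw [← map_smul, kill_quot a ha, map_zero]
  · intro hg
    refine ⟨S.liftQ g ?_, ?_⟩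
    · refine Submodule.smul_le.2 fun a ha x _ => ?_
      have := LinearMap.congr_fun (hg a ha) x
      simpa using this
    · ext x; simp [f]

lemma len_soc [Module.Finite R M] [Module.IsReflexive R M] :
    len R (soc R M) = rk R * bn R (Module.Dual R M) := by
  rw [len_congr (socEquiv (Module.evalEquiv R M)), len_soc_dual]

lemma mem_smul_basis {n : ℕ} (c : Module.Basis (Fin n) R M) (I : Ideal R) (x : M) :
    x ∈ I • (⊤ : Submodule R M) ↔ ∀ j, c.repr x j ∈ I := by
  constructor
  · intro hx j
    refine Submodule.smul_induction_on hx ?_ ?_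
    · intro a ha y _
      rw [map_smul]
      exact I.mul_mem_right _ ha
    · intro y z hy hz
      rw [map_add]
      exact I.add_mem hy hz
  · intro h
    rw [← c.sum_repr x]
    exact Submodule.sum_mem _ fun j _ => Submodule.smul_mem_smul (h j) trivial

/-- Reduction modulo the maximal ideal. -/
def redMap (R : Type) [CommRing R] [IsLocalRing R] (n : ℕ) :
    (Fin n → R) →ₗ[R] (Fin n → R ⧸ maximalIdeal R) :=
  LinearMap.pi fun j => (Submodule.mkQ (maximalIdeal R)) ∘ₗ LinearMap.proj j

lemma redMap_surj (n : ℕ) : Function.Surjective (redMap R n) := by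
  intro y
  choose g hg using fun j => Submodule.mkQ_surjective (maximalIdeal R) (y j)
  exact ⟨g, funext hg⟩

lemma redMap_ker (n : ℕ) : LinearMap.ker (redMap R n) = maximalIdeal R • ⊤ := by
  ext x
  rw [mem_smul_basis (Pi.basisFun R (Fin n)), LinearMap.mem_ker, funext_iff]
  refine forall_congr' fun j => ?_
  simp only [Pi.basisFun_repr]
  exact Submodule.Quotient.mk_eq_zero _

lemma bn_pi (n : ℕ) : bn R (Fin n → R) = n := by
  have : n = len R (Fin n → R ⧸ maximalIdeal R) := by rw [len_pi, len_k, mul_one]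
  conv_rhs => rw [this]
  exact len_congr (Submodule.quotEquivOfEq _ _ (redMap_ker n).symm ≪≫ₗ
    (redMap R n).quotKerEquivOfSurjective (redMap_surj n))

lemma bn_free [Module.Free R M] [Module.Finite R M] : bn R M = Module.finrank R M := by
  rw [bn_congr (Module.finBasis R M).equivFun, bn_pi]

lemma exists_pres (M : Type) [AddCommGroup M] [Module R M] [Module.Finite R M] :
    ∃ (n : ℕ) (p : (Fin n → R) →ₗ[R] M), Function.Surjective p ∧
      LinearMap.ker p ≤ maximalIdeal R • ⊤ := by
  let S := maximalIdeal R • (⊤ : Submodule R M)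
  obtain ⟨n, ⟨e⟩⟩ := exists_basis (R := R) (M ⧸ S) kill_quot
  obtain ⟨p, hp⟩ := Module.projective_lifting_property S.mkQ
    (e.symm.toLinearMap ∘ₗ redMap R n) S.mkQ_surjective
  have hp' : ∀ x, S.mkQ (p x) = e.symm (redMap R n x) := fun x => LinearMap.congr_fun hp x
  refine ⟨n, p, ?_, ?_⟩
  · rw [← LinearMap.range_eq_top, ← top_le_iff]
    refine Submodule.le_of_le_smul_of_le_jacobson_bot (I := maximalIdeal R)
      Module.Finite.fg_top (maximalIdeal_le_jacobson _) ?_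
    intro y _
    obtain ⟨x, hx⟩ := redMap_surj n (e (S.mkQ y))
    have h1 : S.mkQ (y - p x) = 0 := by
      rw [map_sub, hp', hx]; simp
    have h2 : y - p x ∈ S := by
      rwa [Submodule.mkQ_apply, Submodule.Quotient.mk_eq_zero] at h1
    rw [show y = p x + (y - p x) by abel]
    exact Submodule.add_mem_sup ⟨x, rfl⟩ h2
  · intro x hx
    rw [← redMap_ker, LinearMap.mem_ker]
    apply e.symm.injective
    rw [← hp', LinearMap.mem_ker.1 hx]; simp

lemma bn_pos [Module.Finite R M] [Nontrivial M] : 0 < bn R M := by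
  rw [Nat.pos_iff_ne_zero]
  intro h
  rw [bn, len_eq_zero, Submodule.Quotient.subsingleton_iff] at h
  have := Submodule.le_of_le_smul_of_le_jacobson_bot (I := maximalIdeal R) (N := ⊥) (N' := ⊤)
      (M := M) (R := R) Module.Finite.fg_top (maximalIdeal_le_jacobson _) (by rw [h]; simp)
  rw [top_le_iff] at this
  exact bot_ne_top this

lemma len_dual_le [Module.Finite R M] (N : Submodule R M) :
    len R (M →ₗ[R] R) ≤ len R ((M ⧸ N) →ₗ[R] R) + len R (LinearMap.range N.subtype.dualMap) := by
  let f : (M →ₗ[R] R) →ₗ[R] (N →ₗ[R] R) := N.subtype.dualMap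
  have h1 := len_exact (R := R) (N := LinearMap.ker f) (P := LinearMap.range f)
    (LinearMap.ker f).subtype f.rangeRestrict Subtype.val_injective
    f.surjective_rangeRestrict (by
      intro x
      rw [← Subtype.coe_inj]
      change f x = 0 ↔ _
      simp)
  have h3 : len R (LinearMap.ker f) ≤ len R ((M ⧸ N) →ₗ[R] R) := by
    let g : ((M ⧸ N) →ₗ[R] R) →ₗ[R] (M →ₗ[R] R) := N.mkQ.dualMap
    have hle : LinearMap.ker f ≤ LinearMap.range g := by
      intro φ hφ
      have hN : N ≤ LinearMap.ker φ := fun x hx =>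
        LinearMap.congr_fun (LinearMap.mem_ker.1 hφ) ⟨x, hx⟩
      exact ⟨N.liftQ φ hN, LinearMap.ext fun x => rfl⟩
    rw [len_congr (M := (M ⧸ N) →ₗ[R] R) (N := LinearMap.range g) (LinearEquiv.ofInjective g
      (LinearMap.dualMap_injective_of_surjective N.mkQ_surjective))]
    exact len_le_of_inj (Submodule.inclusion hle) (Submodule.inclusion_injective hle)
  rw [h1]
  change _ ≤ _ + len R (LinearMap.range f)
  omega

lemma len_hom_le [Module.Finite R M] :
    len R (M →ₗ[R] R) ≤ rk R * len R M := by
  have hfl : IsFiniteLength R M := by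
    rw [isFiniteLength_iff_isNoetherian_isArtinian]; exact ⟨inferInstance, inferInstance⟩
  clear * - hfl
  induction hfl with
  | @of_subsingleton M _ _ _ =>
    have : Subsingleton (M →ₗ[R] R) := ⟨fun f g => LinearMap.ext fun x => by
      rw [Subsingleton.elim x 0]; simp⟩
    rw [len_eq_zero.2 this]; simp
  | @of_simple_quotient M _ _ N hs hN ih =>
    have hM : IsFiniteLength R M := .of_simple_quotient hN
    have := (isFiniteLength_iff_isNoetherian_isArtinian.1 hM).1
    have hk : ∀ a ∈ maximalIdeal R, ∀ x : M ⧸ N, a • x = 0 := by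
      intro a ha x
      obtain ⟨I, hI, ⟨e⟩⟩ := isSimpleModule_iff_quot_maximal.1 hs
      rw [IsLocalRing.eq_maximalIdeal hI] at e
      apply e.injective
      rw [map_smul, map_zero]
      obtain ⟨y, hy⟩ := Submodule.mkQ_surjective _ (e x)
      rw [← hy, ← map_smul, Submodule.mkQ_apply, Submodule.Quotient.mk_eq_zero]
      exact Ideal.mul_mem_right _ _ ha
    have h3 := len_dual_le N
    have h2 : len R (LinearMap.range N.subtype.dualMap) ≤ len R (N →ₗ[R] R) :=
      len_le_of_inj (LinearMap.range N.subtype.dualMap).subtype Subtype.val_injective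
    rw [len_hom_of_kill hk] at h3
    have h4 := len_sub N
    rw [h4, mul_add]
    omega

lemma baer_of_rk (h : rk R = 1) : Module.Baer R R := by
  rw [Module.Baer.iff_surjective]
  intro I
  have h1 := len_hom_le (R := R) (M := I)
  have h2 := len_hom_le (R := R) (M := R ⧸ I)
  have h3 := len_sub (R := R) (M := R) I
  let f : (R →ₗ[R] R) →ₗ[R] (I →ₗ[R] R) := (Submodule.subtype I).dualMap
  have h4 := len_dual_le (R := R) (M := R) I
  change _ ≤ _ + len R (LinearMap.range f) at h4
  rw [len_congr (LinearMap.ringLmapEquivSelf R R R)] at h4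
  rw [h, one_mul] at h1 h2
  have h6 : LinearMap.range f = ⊤ := sub_eq_top _ (by omega)
  exact LinearMap.range_eq_top.1 h6

lemma soc_eq (hr : rk R ≠ 1) [Module.Finite R M] [Module.IsReflexive R M]
    (kill : ∀ a ∈ (maximalIdeal R) ^ 2, ∀ x : M, a • x = 0) :
    soc R M = maximalIdeal R • ⊤ := by
  apply le_antisymm
  · intro x hx
    by_contra hx'
    let S := maximalIdeal R • (⊤ : Submodule R M)
    obtain ⟨n, ⟨e⟩⟩ := exists_basis (R := R) (M ⧸ S) kill_quot
    have h0 : e (S.mkQ x) ≠ 0 := by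
      intro h
      rw [LinearEquiv.map_eq_zero_iff, Submodule.mkQ_apply, Submodule.Quotient.mk_eq_zero] at h
      exact hx' h
    obtain ⟨j, hj⟩ := Function.ne_iff.1 h0
    obtain ⟨u, hu⟩ := Submodule.mkQ_surjective _ (e (S.mkQ x) j)
    have hun : IsUnit u := by
      by_contra hnu
      apply hj
      rw [← hu, Submodule.mkQ_apply]
      exact (Submodule.Quotient.mk_eq_zero _).2 ((mem_maximalIdeal u).2 hnu)
    obtain ⟨v, hv⟩ := hun.exists_left_inv
    let π : M →ₗ[R] R ⧸ maximalIdeal R := (LinearMap.proj j ∘ₗ e.toLinearMap) ∘ₗ S.mkQ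
    have hπ : π (v • x) = Submodule.Quotient.mk 1 := by
      rw [map_smul]
      change v • e (S.mkQ x) j = _
      rw [← hu, ← map_smul, smul_eq_mul, hv]; rfl
    let i : (R ⧸ maximalIdeal R) →ₗ[R] M :=
      Submodule.liftQ _ (LinearMap.toSpanSingleton R M (v • x)) (by
        intro a ha
        rw [LinearMap.mem_ker, LinearMap.toSpanSingleton_apply, smul_comm, hx a ha, smul_zero])
    have hid : π ∘ₗ i = LinearMap.id := by
      ext
      simp only [LinearMap.comp_apply, i, Submodule.mkQ_apply, Submodule.liftQ_apply,
        LinearMap.toSpanSingleton_apply, one_smul]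
      exact hπ
    have hrefl : Module.IsReflexive R (R ⧸ maximalIdeal R) := .of_split i π hid
    have h1 := len_congr (Module.evalEquiv R (R ⧸ maximalIdeal R))
    have hk : ∀ a ∈ maximalIdeal R, ∀ f : (R ⧸ maximalIdeal R) →ₗ[R] R, a • f = 0 := by
      intro a ha f
      ext
      simp only [LinearMap.comp_apply, LinearMap.smul_apply]
      rw [← map_smul, Submodule.mkQ_apply, ← Submodule.Quotient.mk_smul,
        (Submodule.Quotient.mk_eq_zero _).2]
      · simp
      · exact Ideal.mul_mem_right _ _ ha
    have h2 := len_hom_of_kill (R := R) (M := (R ⧸ maximalIdeal R) →ₗ[R] R) hk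
    rw [len_k] at h1
    change 1 = len R (((R ⧸ maximalIdeal R) →ₗ[R] R) →ₗ[R] R) at h1
    rw [h2] at h1
    exact hr (Nat.eq_one_of_mul_eq_one_right h1.symm)
  · refine Submodule.smul_le.2 fun b hb y _ a ha => ?_
    rw [smul_smul]
    exact kill _ (by rw [pow_two]; exact Ideal.mul_mem_mul ha hb) y

lemma len_refl (hr : rk R ≠ 1) [Module.Finite R M] [Module.IsReflexive R M]
    (kill : ∀ a ∈ (maximalIdeal R) ^ 2, ∀ x : M, a • x = 0) :
    len R M = bn R M + rk R * bn R (Module.Dual R M) := by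
  rw [len_sub (maximalIdeal R • (⊤ : Submodule R M)), ← len_soc, soc_eq hr kill, bn, add_comm]

end

section
variable {R : Type} [CommRing R] [IsLocalRing R] [IsArtinianRing R]
variable {A F B : Type} [AddCommGroup A] [Module R A] [AddCommGroup F] [Module R F]
  [AddCommGroup B] [Module R B] [Module.Free R F] [Module.Finite R F]
  {i : A →ₗ[R] F} {p : F →ₗ[R] B}

lemma bn_dual_free : bn R (Module.Dual R F) = bn R F :=
  (bn_congr (Module.finBasis R F).toDualEquiv).symm

lemma GoodSeq.le (h : GoodSeq R A F B i p) (hm2 : (maximalIdeal R) ^ 2 ≠ ⊥) (x : A) :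
    i x ∈ maximalIdeal R • (⊤ : Submodule R F) := by
  rw [mem_smul_basis (Module.finBasis R F)]
  intro j
  rw [mem_maximalIdeal]
  intro hu
  apply hm2
  rw [eq_bot_iff]
  intro a ha
  have h1 : (Module.finBasis R F).repr (a • i x) j = 0 := by
    rw [← map_smul, h.killA a ha, map_zero, map_zero]; rfl
  rw [map_smul, Finsupp.smul_apply, smul_eq_mul] at h1
  exact (hu.mul_left_eq_zero).1 h1

lemma GoodSeq.bnB (h : GoodSeq R A F B i p) (hm2 : (maximalIdeal R) ^ 2 ≠ ⊥) :
    bn R B = bn R F := by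
  let S := maximalIdeal R • (⊤ : Submodule R B)
  let T := maximalIdeal R • (⊤ : Submodule R F)
  have hs : Function.Surjective (S.mkQ ∘ₗ p) := S.mkQ_surjective.comp h.surj
  refine (len_congr (Submodule.quotEquivOfEq T _ ?_ ≪≫ₗ
    (S.mkQ ∘ₗ p).quotKerEquivOfSurjective hs)).symm
  ext x
  rw [LinearMap.mem_ker, LinearMap.comp_apply, Submodule.mkQ_apply,
    Submodule.Quotient.mk_eq_zero]
  change x ∈ T ↔ p x ∈ maximalIdeal R • (⊤ : Submodule R B)
  rw [← map_msmul p h.surj]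
  constructor
  · intro hx; exact ⟨x, hx, rfl⟩
  · rintro ⟨y, hy, hxy⟩
    obtain ⟨a, ha⟩ := (h.exact (x - y)).1 (by rw [map_sub, hxy, sub_self])
    rw [show x = y + (x - y) by abel, ← ha]
    exact T.add_mem hy (h.le hm2 a)

lemma GoodSeq.bnA (h : GoodSeq R A F B i p) (hm2 : (maximalIdeal R) ^ 2 ≠ ⊥) :
    bn R (Module.Dual R A) = bn R F := by
  rw [h.dual.bnB hm2, bn_dual_free]

lemma GoodSeq.count (h : GoodSeq R A F B i p) (hm2 : (maximalIdeal R) ^ 2 ≠ ⊥)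
    (hr : rk R ≠ 1) :
    bn R F * len R R = bn R A + rk R * bn R F + (bn R F + rk R * bn R (Module.Dual R B)) := by
  have := h.reflA
  have := h.reflB
  have : Module.Finite R A := Module.Finite.of_injective i h.inj
  have : Module.Finite R B := Module.Finite.of_surjective p h.surj
  have h1 := len_exact i p h.inj h.surj h.exact
  rw [len_refl hr h.killA, len_refl hr h.killB, h.bnA hm2, h.bnB hm2, len_free, ← bn_free] at h1
  exact h1

lemma GoodSeq.soc_le (h : GoodSeq R A F B i p) (hm2 : (maximalIdeal R) ^ 2 ≠ ⊥)
    (hr : rk R ≠ 1) [Nontrivial B] : soc R R ≤ (maximalIdeal R) ^ 2 := by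
  have := h.reflA
  have : Module.Finite R A := Module.Finite.of_injective i h.inj
  have : Module.Finite R B := Module.Finite.of_surjective p h.surj
  have hpos : 0 < Module.finrank R F := by
    rw [← bn_free, ← h.bnB hm2]; exact bn_pos
  have h1 : (soc R A).map i = soc R F := by
    apply sub_eq_of_le
    · rintro _ ⟨x, hx, rfl⟩ a ha
      rw [← map_smul, hx a ha, map_zero]
    · rw [← len_congr (Submodule.equivMapOfInjective i h.inj (soc R A)), len_soc, len_soc,
        h.bnA hm2, bn_dual_free]
  have h2 : soc R F ≤ (maximalIdeal R) ^ 2 • ⊤ := by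
    rw [← h1, soc_eq hr h.killA, Submodule.map_smul'', pow_two, Submodule.mul_smul]
    refine Submodule.smul_mono le_rfl ?_
    rintro _ ⟨x, _, rfl⟩
    exact h.le hm2 x
  intro x hx
  let c := Module.finBasis R F
  let j : Fin (Module.finrank R F) := ⟨0, hpos⟩
  have h3 : x • c j ∈ soc R F := by
    intro a ha
    rw [smul_smul, ← smul_eq_mul, hx a ha, zero_smul]
  have h4 := (mem_smul_basis c _ _).1 (h2 h3) j
  simpa using h4

lemma len_soc_ring : len R (soc R R) = rk R := by
  rw [len_soc, bn_dual_free, bn_free, Module.finrank_self, mul_one]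

lemma len_ring : len R R = 1 + len R (↥(maximalIdeal R) ⧸
        (Submodule.comap (maximalIdeal R).subtype ((maximalIdeal R) ^ 2)))
        + len R (↥((maximalIdeal R) ^ 2)) := by
  have h1 := len_sub (R := R) (M := R) (maximalIdeal R)
  have h2 := len_sub (R := R) (M := maximalIdeal R)
    (Submodule.comap (maximalIdeal R).subtype ((maximalIdeal R) ^ 2))
  have h3 := len_congr (R := R) (Submodule.comapSubtypeEquivOfLe
    (Ideal.pow_le_self (I := maximalIdeal R) two_ne_zero))
  rw [len_k] at h1
  rw [h1, h2, ← h3]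
  change _ + _ + _ = _
  omega

lemma soc_ring_eq (hm3 : (maximalIdeal R) ^ 3 = ⊥) (h : soc R R ≤ (maximalIdeal R) ^ 2) :
    len R (↥((maximalIdeal R) ^ 2)) = rk R := by
  have : soc R R = (maximalIdeal R) ^ 2 := by
    apply le_antisymm h
    intro x hx a ha
    have : a * x ∈ (maximalIdeal R) ^ 3 := by
      rw [pow_succ']; exact Ideal.mul_mem_mul ha hx
    rw [hm3] at this
    exact this
  rw [← this, len_soc_ring]

lemma GoodSeq.final (h : GoodSeq R A F B i p) (hm2 : (maximalIdeal R) ^ 2 ≠ ⊥)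
    (hr : rk R ≠ 1) {e : ℕ} (he : len R R = 1 + e + rk R) :
    (1 + rk R) * bn R (Module.Dual R B) = e * bn R B := by
  have h1 := h.count hm2 hr
  have h2 := h.dual.count hm2 hr
  have := h.reflA
  rw [bn_dual_free, ← bn_congr (Module.evalEquiv R A)] at h2
  rw [h.bnB hm2]
  rw [he] at h1 h2
  have h3 : e * bn R F = bn R A + rk R * bn R (Module.Dual R B) := by linarith
  have h4 : e * bn R F = bn R (Module.Dual R B) + rk R * bn R A := by linarith
  have h5 : (bn R A : ℤ) = bn R (Module.Dual R B) := by
    have h6 : ((rk R : ℤ) - 1) * (bn R A - bn R (Module.Dual R B)) = 0 := by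
      zify at h3 h4
      linarith
    rcases mul_eq_zero.1 h6 with h7 | h7
    · exfalso; apply hr; omega
    · linarith
  have h5' : bn R A = bn R (Module.Dual R B) := by exact_mod_cast h5
  rw [h3, h5']; ring

lemma final_of_module (B : Type) [AddCommGroup B] [Module R B] [Module.Finite R B]
    [Module.IsReflexive R B] [Nontrivial B] (hE : ExtendProp R B)
    (hE' : ExtendProp R (Module.Dual R B))
    (hm3 : (maximalIdeal R) ^ 3 = ⊥) (hm2 : (maximalIdeal R) ^ 2 ≠ ⊥)
    (hr : rk R ≠ 1)
    (kill : ∀ a ∈ (maximalIdeal R) ^ 2, ∀ x : B, a • x = 0) :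
    len R (↥((maximalIdeal R) ^ 2)) = rk R ∧
    len R (↥(maximalIdeal R) ⧸
        (Submodule.comap (maximalIdeal R).subtype ((maximalIdeal R) ^ 2))) = rk R + 1 := by
  obtain ⟨n, p, hp, hk⟩ := exists_pres (R := R) B
  have g1 := goodSeq_of_pres hE hm3 kill p hp hk
  have hl := soc_ring_eq hm3 (g1.soc_le hm2 hr)
  refine ⟨hl, ?_⟩
  have hlen := len_ring (R := R)
  rw [hl] at hlen
  set e := len R (↥(maximalIdeal R) ⧸
        (Submodule.comap (maximalIdeal R).subtype ((maximalIdeal R) ^ 2)))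
  have kill' : ∀ a ∈ (maximalIdeal R) ^ 2, ∀ f : Module.Dual R B, a • f = 0 := by
    intro a ha f
    ext x
    rw [LinearMap.smul_apply, ← map_smul, kill a ha, map_zero]; rfl
  obtain ⟨n', p', hp', hk'⟩ := exists_pres (R := R) (Module.Dual R B)
  have g2 := goodSeq_of_pres hE' hm3 kill' p' hp' hk'
  have f1 := g1.final hm2 hr hlen
  have f2 := g2.final hm2 hr hlen
  rw [← bn_congr (Module.evalEquiv R B)] at f2
  have hb : 0 < bn R B := bn_pos
  have h6 : (1 + rk R) ^ 2 * bn R B = e ^ 2 * bn R B := by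
    calc (1 + rk R) ^ 2 * bn R B = (1 + rk R) * ((1 + rk R) * bn R B) := by ring
      _ = e * ((1 + rk R) * bn R (Module.Dual R B)) := by rw [f2]; ring
      _ = _ := by rw [f1]; ring
  have h7 := Nat.eq_of_mul_eq_mul_right hb h6
  have h8 := Nat.pow_left_injective two_ne_zero h7
  omega

lemma reduce (hm3 : (maximalIdeal R) ^ 3 = ⊥) (n : ℕ) :
    ∀ (M : Type) [AddCommGroup M] [Module R M] [Module.Finite R M] [Module.IsReflexive R M],
      len R M = n → ExtendProp R M → ExtendProp R (Module.Dual R M) → ¬ Module.Free R M →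
    ∃ B : ModuleCat.{0} R, Module.Finite R B ∧ Module.IsReflexive R B ∧ Nontrivial B ∧
      ExtendProp R B ∧ ExtendProp R (Module.Dual R B) ∧
      (∀ a ∈ (maximalIdeal R) ^ 2, ∀ x : B, a • x = 0) := by
  induction n using Nat.strong_induction_on with
  | _ n ih =>
  intro M _ _ _ _ hlen hE hE' hf
  by_cases hfun : ∀ f : Module.Dual R M, ∀ x, f x ∈ maximalIdeal R
  · refine ⟨ModuleCat.of R M, ‹_›, ‹_›, ?_, hE, hE', ?_⟩
    · by_contra hn
      have := not_nontrivial_iff_subsingleton.1 hn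
      exact hf (Module.Free.of_subsingleton R M)
    · intro a ha x
      apply (Module.bijective_dual_eval R M).1
      ext f
      have h1 : a * f x ∈ (maximalIdeal R) ^ 3 := by
        rw [pow_succ]; exact Ideal.mul_mem_mul ha (hfun f x)
      rw [hm3] at h1
      simpa using h1
  · push Not at hfun
    obtain ⟨f, x, hx⟩ := hfun
    have hu : IsUnit (f x) := by
      by_contra h; exact hx ((mem_maximalIdeal _).2 h)
    obtain ⟨v, hv⟩ := hu.exists_left_inv
    have hfv : f (v • x) = 1 := by rw [map_smul, smul_eq_mul, hv]
    let K := LinearMap.ker f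
    let t : M →ₗ[R] K := LinearMap.codRestrict K
      (LinearMap.id - (LinearMap.toSpanSingleton R M (v • x)) ∘ₗ f) (by
        intro y
        simp only [K, LinearMap.mem_ker, LinearMap.sub_apply, LinearMap.comp_apply,
          LinearMap.toSpanSingleton_apply, LinearMap.id_apply, map_sub]
        rw [map_smul f (f y), hfv]; simp)
    have hts : ∀ y : K, t (K.subtype y) = y := by
      intro y
      apply Subtype.ext
      have : f y = 0 := y.2
      simp [t, this]
    have htsc : t ∘ₗ K.subtype = LinearMap.id := LinearMap.ext hts
    have : Module.IsReflexive R K := .of_split K.subtype t htsc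
    have hfs : Function.Surjective f := fun a => ⟨a • v • x, by rw [map_smul, hfv]; simp⟩
    have hl := len_exact K.subtype f Subtype.val_injective hfs (by intro y; simp [K])
    have hR : 0 < len R R := by
      rw [Nat.pos_iff_ne_zero, Ne, len_eq_zero]
      exact not_subsingleton R
    refine ih (len R K) (by omega) K rfl (hE.retract K.subtype t hts)
      (hE'.retract t.dualMap K.subtype.dualMap ?_) ?_
    · intro g
      ext y
      change g (t (K.subtype y)) = _
      rw [hts]
    · intro hKf
      apply hf
      let j : M →ₗ[R] K × R := t.prod f
      have hj : Function.Bijective j := by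
        constructor
        · rw [← LinearMap.ker_eq_bot, eq_bot_iff]
          intro y hy
          have h1 : f y = 0 := congrArg Prod.snd hy
          have h2 : t y = 0 := congrArg Prod.fst hy
          have h3 := congrArg Subtype.val h2
          simpa [t, h1] using h3
        · rintro ⟨y, a⟩
          have hy : f y = 0 := y.2
          refine ⟨y.1 + a • v • x, ?_⟩
          have h1 : f (y.1 + a • v • x) = a := by
            rw [map_add, hy, map_smul, hfv]; simp
          apply Prod.ext
          · apply Subtype.ext
            change (y.1 + a • v • x) - f (y.1 + a • v • x) • (v • x) = _
            rw [h1]; simp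
          · exact h1
      exact Module.Free.of_equiv (LinearEquiv.ofBijective j hj).symm

end

/-- dim_k m/m² = r + 1 and dim_k m² = r, where r is the type of R.
(Dimensions over the residue field are expressed as lengths over R.) -/
theorem stmt_5 (R : Type) [CommRing R] [IsNoetherianRing R] [IsLocalRing R]
    (hng : ¬ IsGorensteinLocalRing R)
    (hm3 : (IsLocalRing.maximalIdeal R) ^ 3 = ⊥)
    (hm2 : (IsLocalRing.maximalIdeal R) ^ 2 ≠ ⊥)
    (hex : ∃ M : ModuleCat R, Module.Finite R M ∧ GDimZero R M ∧ ¬ Module.Free R M) :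
    ∃ r : ℕ, typeLen R = (r : ℕ∞) ∧
      mlength R ((↥(IsLocalRing.maximalIdeal R)) ⧸
        (Submodule.comap (IsLocalRing.maximalIdeal R).subtype
          ((IsLocalRing.maximalIdeal R) ^ 2))) = ((r + 1 : ℕ) : ℕ∞) ∧
      mlength R (↥((IsLocalRing.maximalIdeal R) ^ 2)) = (r : ℕ∞) := by

  have hA : IsArtinianRing R := artin hm3
  have hr : rk R ≠ 1 := fun h => hng (gor_of_inj R (baer_of_rk h))
  obtain ⟨M, hfin, ⟨hbij, hE1, hE2⟩, hfree⟩ := hex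
  have : Module.IsReflexive R M := ⟨hbij⟩
  obtain ⟨B, h1, h2, h3, h4, h5, h6⟩ := reduce hm3 _ M rfl
    (extendProp_of_ext (hE1 1 one_pos)) (extendProp_of_ext (hE2 1 one_pos)) hfree
  obtain ⟨g1, g2⟩ := final_of_module B h4 h5 hm3 hm2 hr h6
  exact ⟨rk R, mlength_eq rfl, mlength_eq g2, mlength_eq g1⟩
end

section
/- Let (R,m) be a non-Gorenstein Noetherian local ring with m³ = (0), m² ≠ (0), residue field k, and type r. If R possesses a nonfree finitely generated module of G-dimension zero, then the Bass numbers of R satisfy μ⁰ = r, and μⁱ = r^{i+1} − r^{i−1} for all i ≥ 1; equivalently the Bass series of R is (r−t)/(1−rt). -/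
open CategoryTheory

namespace S6
open CategoryTheory Abelian

lemma extMk_zero_inj {C : Type*} [Category* C] [Abelian C] [HasExt C] {X Y : C}
    (P : ProjectiveResolution X) (f : P.complex.X 0 ⟶ Y) (hf : P.complex.d 1 0 ≫ f = 0)
    (h : P.extMk f 1 rfl hf = 0) : f = 0 := by
  rw [← P.extEquivCohomologyClass.apply_eq_iff_eq,
    ProjectiveResolution.extEquivCohomologyClass_extMk,
    ProjectiveResolution.extEquivCohomologyClass_zero,
    CochainComplex.HomComplex.CohomologyClass.mk_eq_zero_iff,
    CochainComplex.HomComplex.Cocycle.toSingleMk_mem_coboundaries_iff _ _ _ _ _ 1 (by simp)] at h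
  obtain ⟨g, hg⟩ := h
  have : P.cochainComplex.d (-(0:ℕ)) 1 = 0 := by
    apply Limits.IsZero.eq_of_tgt
    exact P.cochainComplex.isZero_of_isStrictlyLE 0 1 (by simp)
  rw [this, Limits.zero_comp] at hg
  rw [← cancel_epi (P.cochainComplexXIso (-(0:ℕ)) 0 rfl).hom, ← hg, Limits.comp_zero]

variable {R : Type} [CommRing R]

lemma homology_equiv (S : ShortComplex (ModuleCat.{0} R)) (E : Type) [AddCommGroup E] [Module R E]
    (φ : ∀ x : S.X₂, S.g x = 0 → E)
    (hadd : ∀ x y hx hy, φ (x + y) (by simp [hx, hy]) = φ x hx + φ y hy)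
    (hsmul : ∀ (r : R) x hx, φ (r • x) (by simp [hx]) = r • φ x hx)
    (hs : ∀ e, ∃ x hx, φ x hx = e)
    (hk : ∀ x hx, φ x hx = 0 ↔ ∃ y, S.f y = x) : Nonempty (S.homology ≃ₗ[R] E) := by
  let Φ : LinearMap.ker S.g.hom →ₗ[R] E :=
    { toFun x := φ x.1 x.2
      map_add' x y := hadd _ _ _ _
      map_smul' r x := hsmul _ _ _ }
  have h1 : Function.Surjective Φ := by
    intro e
    obtain ⟨x, hx, rfl⟩ := hs e
    exact ⟨⟨x, hx⟩, rfl⟩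
  have h2 : LinearMap.ker Φ = LinearMap.range S.moduleCatToCycles := by
    ext ⟨x, hx⟩
    rw [LinearMap.mem_ker]
    refine (hk x hx).trans ?_
    constructor
    · rintro ⟨y, rfl⟩
      exact ⟨y, rfl⟩
    · rintro ⟨y, hy⟩
      exact ⟨y, congrArg Subtype.val hy⟩
  exact ⟨S.moduleCatHomologyIso.toLinearEquiv ≪≫ₗ Submodule.quotEquivOfEq _ _ h2.symm ≪≫ₗ 
    Φ.quotKerEquivOfSurjective h1⟩

lemma extMk_zero_inj' {X Y : ModuleCat.{0} R} (P : ProjectiveResolution X)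
    (f : P.complex.X 0 ⟶ Y) (m : ℕ) (hm : 0 + 1 = m) (hf : P.complex.d m 0 ≫ f = 0)
    (h : P.extMk f m hm hf = 0) : f = 0 := by
  subst hm
  exact extMk_zero_inj P f hf h

lemma smul_extMk {X Y : ModuleCat.{0} R} (P : ProjectiveResolution X) {n : ℕ}
    (f : P.complex.X n ⟶ Y) (m : ℕ) (hm : n + 1 = m) (hf : P.complex.d m n ≫ f = 0) (r : R) :
    P.extMk (r • f) m hm (by simp [hf]) = r • P.extMk f m hm hf := by
  rw [Abelian.Ext.smul_eq_comp_mk₀, ProjectiveResolution.extMk_comp_mk₀]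
  congr 1

theorem ext_equiv (X Y : ModuleCat.{0} R) (n : ℕ) :
    Nonempty ((((_root_.Ext R (ModuleCat R) n).obj (Opposite.op X)).obj Y) ≃ₗ[R]
      Abelian.Ext X Y n) := by
  let P := projectiveResolution X
  let K := P.complex.linearYonedaObj R Y
  have hg : ∀ m, n + 1 = m → ∀ f : (P.complex.X n ⟶ Y), 
      (K.d n m).hom f = 0 → P.complex.d m n ≫ f = 0 := by
    intro m hm f h
    exact h
  suffices h : Nonempty ((K.sc n).homology ≃ₗ[R] Abelian.Ext X Y n) by
    obtain ⟨e⟩ := h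
    exact ⟨(P.isoExt (R := R) n Y).toLinearEquiv ≪≫ₗ e⟩
  have hn : n + 1 = (ComplexShape.up ℕ).next n := by simp
  refine homology_equiv (K.sc n) _ (fun x hx => P.extMk x _ hn (hg _ hn x hx)) ?_ ?_ ?_ ?_
  · intro x y hx hy
    exact (P.add_extMk _ _ _ _ _ _).symm
  · intro r x hx
    exact smul_extMk P x _ hn (hg _ hn x hx) r
  · intro α
    obtain ⟨f, hf, rfl⟩ := P.extMk_surjective α _ hn
    exact ⟨f, hf, rfl⟩
  · intro x hx
    cases n with
    | zero =>
      constructor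
      · intro h
        have h0 := extMk_zero_inj' P x _ hn (hg _ hn x hx) h
        exact ⟨0, (map_zero _).trans h0.symm⟩
      · rintro ⟨y, rfl⟩
        have hp : ¬ (ComplexShape.up ℕ).Rel ((ComplexShape.up ℕ).prev 0) 0 := by simp
        have hf : (K.sc 0).f = 0 := K.shape _ _ hp
        have : (K.sc 0).f y = 0 := by rw [hf]; rfl
        refine Eq.trans ?_ (P.extMk_zero (Y := Y) _ hn)
        congr 1
    | succ n =>
      have hp : (ComplexShape.up ℕ).prev (n+1) + 1 = n + 1 := by simp
      exact P.extMk_eq_zero_iff x _ hn (hg _ hn x hx) _ hp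
end S6
namespace S6
open CategoryTheory Abelian

variable {R : Type} [CommRing R]

/-- Ext groups (derived category version) with values in `R`. -/
abbrev E (R : Type) [CommRing R] (M : Type) [AddCommGroup M] [Module R M] (i : ℕ) : Type :=
  Abelian.Ext (ModuleCat.of R M) (ModuleCat.of R R) i

section
variable {A B C : Type} [AddCommGroup A] [Module R A] [AddCommGroup B] [Module R B]
  [AddCommGroup C] [Module R C]

noncomputable def pre (f : A →ₗ[R] B) (i : ℕ) : E R B i →ₗ[R] E R A i :=
  Abelian.Ext.bilinearCompOfLinear R _ _ _ 0 i i (zero_add i) (Ext.mk₀ (ModuleCat.ofHom f))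

lemma pre_apply (f : A →ₗ[R] B) (i : ℕ) (x : E R B i) :
    pre f i x = (Ext.mk₀ (ModuleCat.ofHom f)).comp x (zero_add i) := rfl

lemma pre_id (i : ℕ) (x : E R A i) : pre (LinearMap.id : A →ₗ[R] A) i x = x := by
  rw [pre_apply]; exact Ext.mk₀_id_comp x

lemma pre_comp (f : A →ₗ[R] B) (g : B →ₗ[R] C) (i : ℕ) (x : E R C i) :
    pre (g.comp f) i x = pre f i (pre g i x) := by
  simp only [pre_apply, ModuleCat.ofHom_comp, Ext.mk₀_comp_mk₀_assoc]

lemma pre_add (f g : A →ₗ[R] B) (i : ℕ) (x : E R B i) :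
    pre (f + g) i x = pre f i x + pre g i x := by
  simp only [pre_apply, ModuleCat.ofHom_add, Ext.mk₀_add, Ext.add_comp]

lemma pre_zero (i : ℕ) (x : E R B i) :
    pre (0 : A →ₗ[R] B) i x = 0 := by
  have := pre_add (0 : A →ₗ[R] B) 0 i x
  simpa using this

lemma pre_sum {ι : Type} (s : Finset ι) (f : ι → A →ₗ[R] B) (i : ℕ) (x : E R B i) :
    pre (∑ j ∈ s, f j) i x = ∑ j ∈ s, pre (f j) i x := by
  classical
  induction s using Finset.induction_on with
  | empty => simp [pre_zero]
  | insert a s ha ih => rw [Finset.sum_insert ha, Finset.sum_insert ha, pre_add, ih]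

lemma subsingleton_of_retract (f : A →ₗ[R] B) (g : B →ₗ[R] A) (h : g.comp f = LinearMap.id)
    (i : ℕ) [Subsingleton (E R B i)] : Subsingleton (E R A i) := by
  refine ⟨fun x y => ?_⟩
  rw [← pre_id i x, ← pre_id i y, ← h, pre_comp, pre_comp, Subsingleton.elim (pre g i x) (pre g i y)]

noncomputable def preEquiv (e : A ≃ₗ[R] B) (i : ℕ) : E R B i ≃ₗ[R] E R A i :=
  LinearEquiv.ofLinearMap (pre e.toLinearMap i) (pre e.symm.toLinearMap i)
    (by ext x; simp only [LinearMap.comp_apply, ← pre_comp]; simp [pre_id])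
    (by ext x; simp only [LinearMap.comp_apply, ← pre_comp]; simp [pre_id])

/-- Ext out of a finite power. -/
noncomputable def powEquiv (n : ℕ) (i : ℕ) : E R (Fin n → A) i ≃ₗ[R] (Fin n → E R A i) :=
  LinearEquiv.ofLinearMap
    (LinearMap.pi fun j => pre (LinearMap.single R (fun _ : Fin n => A) j) i)
    (∑ j, (pre (LinearMap.proj (R := R) (φ := fun _ : Fin n => A) j) i).comp (LinearMap.proj j))
    (by
      refine LinearMap.ext fun x => funext fun j => ?_
      simp only [LinearMap.comp_apply, LinearMap.pi_apply, LinearMap.sum_apply, map_sum,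
        LinearMap.proj_apply, LinearMap.id_apply, ← pre_comp]
      refine (Finset.sum_eq_single j ?_ ?_).trans ?_
      · intro b _ hb
        rw [LinearMap.proj_comp_single_ne _ _ _ _ hb, pre_zero]
      · simp
      · rw [LinearMap.proj_comp_single_same, pre_id])
    (by
      refine LinearMap.ext fun x => ?_
      simp only [LinearMap.comp_apply, LinearMap.pi_apply, LinearMap.sum_apply,
        LinearMap.proj_apply, LinearMap.id_apply, ← pre_comp]
      have h : ∑ j, (LinearMap.single R (fun _ : Fin n => A) j).comp
          (LinearMap.proj (R := R) (φ := fun _ : Fin n => A) j) = LinearMap.id := by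
        refine LinearMap.ext fun v => funext fun k => ?_
        simp [LinearMap.sum_apply, Finset.sum_apply, Pi.single_apply]
      exact ((pre_sum _ _ i x).symm.trans (by rw [h])).trans (pre_id i x))

noncomputable def zeroEquiv : E R A 0 ≃ₗ[R] Module.Dual R A :=
  (Ext.linearEquiv₀ (R := R)).trans ModuleCat.homLinearEquiv

lemma length_pow (n i : ℕ) :
    Module.length R (E R (Fin n → A) i) = n * Module.length R (E R A i) := by
  rw [(powEquiv n i).length_eq, Module.length_pi]; simp

/-- short exact sequence data -/
lemma ses (f : A →ₗ[R] B) (g : B →ₗ[R] C) (hf : Function.Injective f) (hg : Function.Surjective g)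
    (h : Function.Exact f g) : ∃ w, (ShortComplex.mk (ModuleCat.ofHom f) (ModuleCat.ofHom g) w).ShortExact := by
  refine ⟨by ext x; exact h.apply_apply_eq_zero x, ?_⟩
  apply ModuleCat.shortComplex_shortExact <;> assumption

/-- the connecting map with all exactness -/
lemma les (f : A →ₗ[R] B) (g : B →ₗ[R] C) (hf : Function.Injective f) (hg : Function.Surjective g)
    (h : Function.Exact f g) (i : ℕ) : ∃ δ : E R A i →ₗ[R] E R C (i+1),
      Function.Exact (pre g i) (pre f i) ∧ Function.Exact (pre f i) δ ∧
      Function.Exact δ (pre g (i+1)) := by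
  obtain ⟨w, hS⟩ := ses f g hf hg h
  refine ⟨Abelian.Ext.bilinearCompOfLinear R _ _ _ 1 i (i+1) (add_comm 1 i) hS.extClass, ?_, ?_, ?_⟩
  · intro x
    constructor
    · exact fun hx => Ext.contravariant_sequence_exact₂ hS _ x hx
    · rintro ⟨y, rfl⟩
      rw [← pre_comp, h.linearMap_comp_eq_zero, pre_zero]
  · intro x
    constructor
    · exact fun hx => Ext.contravariant_sequence_exact₁ hS _ x (add_comm 1 i) hx
    · rintro ⟨y, rfl⟩
      exact hS.extClass_comp_assoc y (h := add_comm 1 i)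
  · intro x
    constructor
    · exact fun hx => Ext.contravariant_sequence_exact₃ hS _ x hx (add_comm 1 i)
    · rintro ⟨y, rfl⟩
      exact hS.comp_extClass_assoc y (add_comm 1 i)

lemma pre_zero_injective (g : B →ₗ[R] C) (hg : Function.Surjective g) :
    Function.Injective (pre g 0) := by
  have : Epi (ModuleCat.ofHom g) := by rw [ModuleCat.epi_iff_surjective]; exact hg
  exact Ext.precomp_mk₀_injective_of_epi _ (ModuleCat.ofHom g)

end

lemma length_shift {A B C : Type} [AddCommGroup A] [Module R A] [AddCommGroup B] [Module R B]
  [AddCommGroup C] [Module R C] (f : A →ₗ[R] B) (g : B →ₗ[R] C) (hf : Function.Injective f) (hg : Function.Surjective g)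
    (h : Function.Exact f g) (hB : ∀ i, 0 < i → Subsingleton (E R B i)) (i : ℕ) (hi : 0 < i) :
    Module.length R (E R A i) = Module.length R (E R C (i+1)) := by
  obtain ⟨δ, h1, h2, h3⟩ := les f g hf hg h i
  have := hB i hi
  have := hB (i+1) (by omega)
  refine (LinearEquiv.ofBijective δ ⟨?_, ?_⟩).length_eq
  · rw [injective_iff_map_eq_zero]
    intro x hx
    obtain ⟨y, rfl⟩ := (h2 x).1 hx
    rw [Subsingleton.elim y 0, map_zero]
  · intro x
    exact (h3 x).1 (Subsingleton.elim _ _)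

lemma length_zero {A B C : Type} [AddCommGroup A] [Module R A] [AddCommGroup B] [Module R B]
  [AddCommGroup C] [Module R C] (f : A →ₗ[R] B) (g : B →ₗ[R] C) (hf : Function.Injective f) (hg : Function.Surjective g)
    (h : Function.Exact f g) (hB : ∀ i, 0 < i → Subsingleton (E R B i)) :
    Module.length R (E R B 0) + Module.length R (E R C 1) = 
      Module.length R (E R C 0) + Module.length R (E R A 0) := by
  obtain ⟨δ, h1, h2, h3⟩ := les f g hf hg h 0
  have := hB 1 (by omega)
  have hδ : Function.Surjective δ := fun x => (h3 x).1 (Subsingleton.elim _ _)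
  rw [Module.length_eq_add_of_exact (pre g 0) (pre f 0).rangeRestrict (pre_zero_injective g hg)
    (LinearMap.surjective_rangeRestrict _) (by
      intro x; rw [← h1 x, Subtype.ext_iff]; rfl),
    Module.length_eq_add_of_exact (LinearMap.range (pre f 0)).subtype δ (Submodule.subtype_injective _) hδ
      (by intro x; rw [h2 x]; simp), add_assoc]

end S6
namespace S6
open CategoryTheory Abelian IsLocalRing

variable {R : Type} [CommRing R] [IsLocalRing R]

abbrev kk (R : Type) [CommRing R] [IsLocalRing R] : Type := R ⧸ maximalIdeal R

lemma vec_equiv (V : Type) [AddCommGroup V] [Module R V] [Module.Finite R V]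
    (h : ∀ r ∈ maximalIdeal R, ∀ v : V, r • v = 0) :
    ∃ n : ℕ, Nonempty (V ≃ₗ[R] (Fin n → kk R)) := by
  have hV : Module.IsTorsionBySet R V (maximalIdeal R : Set R) := fun v r => h r.1 r.2 v
  letI : Module (kk R) V := hV.module
  letI : Field (kk R) := Ideal.Quotient.field _
  haveI : IsScalarTower R (kk R) V := ⟨fun r c v => by
    obtain ⟨c, rfl⟩ := Ideal.Quotient.mk_surjective c
    have h1 : r • (Ideal.Quotient.mk (maximalIdeal R) c : kk R) = Ideal.Quotient.mk _ (r * c) := rfl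
    have h2 : ∀ a : R, (Ideal.Quotient.mk (maximalIdeal R) a : kk R) • v = a • v := fun a => rfl
    rw [h1, h2, h2, mul_smul]⟩
  haveI : Module.Finite (kk R) V := Module.Finite.of_restrictScalars_finite R (kk R) V
  exact ⟨_, ⟨(Module.finBasis (kk R) V).equivFun.restrictScalars R⟩⟩

lemma length_kk : Module.length R (kk R) = 1 := by
  rw [Module.length_eq_one_iff]
  exact isSimpleModule_iff_isCoatom.2 (Ideal.isMaximal_def.1 (maximalIdeal.isMaximal R))

lemma length_pow_kk (n : ℕ) : Module.length R (Fin n → kk R) = n := by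
  rw [Module.length_pi, length_kk]; simp

lemma ext_one_finite [IsNoetherianRing R] [IsArtinianRing R] (h : Subsingleton (E R (kk R) 1))
    (M : Type) [AddCommGroup M] [Module R M] (hM : Module.Finite R M) : Subsingleton (E R M 1) := by
  refine IsNoetherianRing.induction_on_isQuotientEquivQuotientPrime R hM
    (motive := fun N _ _ _ => Subsingleton (E R N 1)) ?_ ?_ ?_
  · intro N _ _ _ hN
    exact subsingleton_of_retract (0 : N →ₗ[R] kk R) 0 (LinearMap.ext fun x => Subsingleton.elim _ _) 1
  · intro N _ _ _ p e
    have hp : p.1 = maximalIdeal R := IsLocalRing.eq_maximalIdeal (IsArtinianRing.isMaximal_of_isPrime p.1)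
    rw [hp] at e
    exact subsingleton_of_retract e.toLinearMap e.symm.toLinearMap (by ext; simp) 1
  · intro N₁ _ _ _ N₂ _ _ _ N₃ _ _ _ f g hf hg hfg h1 h3
    obtain ⟨δ, h1, h2, h3⟩ := les f g hf hg hfg 1
    refine ⟨fun x y => ?_⟩
    rw [← sub_eq_zero]
    obtain ⟨z, hz⟩ := (h1 (x - y)).1 (Subsingleton.elim _ _)
    rw [← hz, Subsingleton.elim z 0, map_zero]

lemma gorenstein_of [IsNoetherianRing R] [IsArtinianRing R] (h : Subsingleton (E R (kk R) 1)) :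
    IsGorensteinLocalRing R := by
  have hB : Module.Baer R R := by
    intro I g
    have := ext_one_finite h (R ⧸ I) inferInstance
    obtain ⟨δ, h1, h2, h3⟩ := les I.subtype I.mkQ (Submodule.subtype_injective I) (Submodule.mkQ_surjective I)
      (LinearMap.exact_subtype_mkQ I) 0
    obtain ⟨y, hy⟩ := (h2 (Ext.mk₀ (ModuleCat.ofHom g))).1 (Subsingleton.elim _ _)
    obtain ⟨f, rfl⟩ := (Ext.mk₀_bijective _ _).2 y
    rw [pre_apply, Ext.mk₀_comp_mk₀] at hy
    have := (Ext.mk₀_bijective _ _).1 hy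
    refine ⟨f.hom, fun x hx => ?_⟩
    exact LinearMap.congr_fun (congrArg ModuleCat.Hom.hom this) ⟨x, hx⟩
  have hI : Module.Injective R R := hB.injective
  have := Module.injective_object_of_injective_module R R
  refine ⟨inferInstance, inferInstance, 0, fun N i hi => ?_⟩
  obtain ⟨i, rfl⟩ := Nat.exists_eq_succ_of_ne_zero hi.ne'
  obtain ⟨e⟩ := ext_equiv N (ModuleCat.of R R) (i+1)
  have : Subsingleton (Ext N (ModuleCat.of R R) (i+1)) := Ext.subsingleton_of_injective _ _ i
  exact e.toEquiv.subsingleton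

/-- The good modules. -/
structure P (N : Type) [AddCommGroup N] [Module R N] : Prop where
  fin : Module.Finite R N
  ext : ∀ i, 0 < i → Subsingleton (E R N i)
  soc : ∀ s : R, (∀ r ∈ maximalIdeal R, s * r = 0) → ∀ n : N, s • n = 0

abbrev mm (R : Type) [CommRing R] [IsLocalRing R] (N : Type) [AddCommGroup N] [Module R N] : Submodule R N :=
  maximalIdeal R • (⊤ : Submodule R N)

section
variable {N : Type} [AddCommGroup N] [Module R N]

lemma smul_mkQ (r : R) (hr : r ∈ maximalIdeal R) (v : N ⧸ mm R N) : r • v = 0 := by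
  obtain ⟨n, rfl⟩ := Submodule.mkQ_surjective _ v
  rw [← map_smul, Submodule.mkQ_apply, Submodule.Quotient.mk_eq_zero]
  exact Submodule.smul_mem_smul hr trivial

lemma P.mm_killed (hN : P (R := R) N) (hm3 : (maximalIdeal R) ^ 3 = ⊥) (r : R) (hr : r ∈ maximalIdeal R)
    (n : N) (hn : n ∈ mm R N) : r • n = 0 := by
  refine Submodule.smul_induction_on hn ?_ ?_
  · intro s hs x _
    rw [smul_smul]
    refine hN.soc _ (fun t ht => ?_) x
    have : r * s * t ∈ maximalIdeal R ^ 3 := by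
      rw [pow_three, mul_assoc]
      exact Ideal.mul_mem_mul hr (Ideal.mul_mem_mul hs ht)
    rwa [hm3] at this
  · intro x y hx hy
    rw [smul_add, hx, hy, add_zero]

lemma P.soc_le [IsNoetherianRing R] [IsArtinianRing R] (hng : ¬ IsGorensteinLocalRing R)
    (hN : P (R := R) N) (x : N) (hx : ∀ r ∈ maximalIdeal R, r • x = 0) : x ∈ mm R N := by
  by_contra hxn
  apply hng
  apply gorenstein_of
  have := hN.fin
  obtain ⟨n, ⟨e⟩⟩ := vec_equiv (R := R) (N ⧸ mm R N) smul_mkQ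
  have h0 : e ((mm R N).mkQ x) ≠ 0 := by
    rw [Ne, LinearEquiv.map_eq_zero_iff, Submodule.mkQ_apply, Submodule.Quotient.mk_eq_zero]
    exact hxn
  obtain ⟨j, hj⟩ : ∃ j, e ((mm R N).mkQ x) j ≠ 0 := by
    by_contra! h
    exact h0 (funext h)
  obtain ⟨u, hu⟩ := Ideal.Quotient.mk_surjective (e ((mm R N).mkQ x) j)
  have hu' : IsUnit u := by
    by_contra hnu
    apply hj
    rw [← hu, Ideal.Quotient.eq_zero_iff_mem]
    exact hnu
  obtain ⟨u, rfl⟩ := hu'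
  let f : kk R →ₗ[R] N := (maximalIdeal R).liftQ (LinearMap.toSpanSingleton R N x) (by
    intro r hr
    exact hx r hr)
  let g : N →ₗ[R] kk R := (↑u⁻¹ : R) • ((LinearMap.proj j).comp (e.toLinearMap.comp (mm R N).mkQ))
  have := hN.ext 1 one_pos
  refine subsingleton_of_retract f g ?_ 1
  refine LinearMap.ext fun c => ?_
  obtain ⟨c, rfl⟩ := Ideal.Quotient.mk_surjective c
  have hf : f (Ideal.Quotient.mk _ c) = c • x := rfl
  rw [LinearMap.comp_apply, hf, map_smul]
  have hgx : g x = Ideal.Quotient.mk _ 1 := by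
    change (↑u⁻¹ : R) • (e ((mm R N).mkQ x) j) = _
    rw [← hu]
    change Ideal.Quotient.mk _ ((↑u⁻¹ : R) * u) = _
    simp
  rw [hgx]
  change Ideal.Quotient.mk _ (c * 1) = _
  simp

lemma P.mm_length [IsNoetherianRing R] [IsArtinianRing R] (hng : ¬ IsGorensteinLocalRing R)
    (hm3 : (maximalIdeal R) ^ 3 = ⊥) (hN : P (R := R) N) {G : Type} [AddCommGroup G] [Module R G]
    (e : N ≃ₗ[R] Module.Dual R G) :
    Module.length R (mm R N) = Module.length R (Module.Dual R (G ⧸ mm R G)) := by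
  let ψ : Module.Dual R (G ⧸ mm R G) →ₗ[R] N := e.symm.toLinearMap.comp (mm R G).mkQ.dualMap
  have hinj : Function.Injective ψ :=
    e.symm.injective.comp (LinearMap.dualMap_injective_of_surjective (Submodule.mkQ_surjective _))
  have hr : LinearMap.range ψ = mm R N := by
    apply le_antisymm
    · rintro _ ⟨φ, rfl⟩
      apply hN.soc_le hng
      intro r hr
      rw [← map_smul]
      have : r • φ = 0 := by
        refine LinearMap.ext fun v => ?_
        rw [LinearMap.smul_apply, ← map_smul, smul_mkQ r hr, map_zero, LinearMap.zero_apply]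
      rw [this, map_zero]
    · intro n hn
      refine ⟨(mm R G).liftQ (e n) ?_, ?_⟩
      · refine Submodule.smul_le.2 fun r hr g _ => ?_
        rw [LinearMap.mem_ker, map_smul, ← LinearMap.smul_apply, ← map_smul, 
          hN.mm_killed hm3 r hr n hn, map_zero, LinearMap.zero_apply]
      · change e.symm _ = n
        rw [LinearEquiv.symm_apply_eq]
        ext g
        rfl
  rw [← hr, ((LinearEquiv.ofInjective ψ hinj).length_eq)]

end
end S6
namespace S6
open CategoryTheory Abelian IsLocalRing

variable {R : Type} [CommRing R]

/-- G-dimension zero in terms of `E`. -/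
structure GD (R : Type) [CommRing R] (N : Type) [AddCommGroup N] [Module R N] : Prop where
  bij : Function.Bijective (Module.Dual.eval R N)
  ext : ∀ i, 0 < i → Subsingleton (E R N i)
  extd : ∀ i, 0 < i → Subsingleton (E R (Module.Dual R N) i)

lemma GD.of (M : Type) [AddCommGroup M] [Module R M] (h : GDimZero R M) : GD R M := by
  refine ⟨h.1, fun i hi => ?_, fun i hi => ?_⟩
  · have := h.2.1 i hi
    obtain ⟨e⟩ := ext_equiv (ModuleCat.of R M) (ModuleCat.of R R) i
    exact e.symm.toEquiv.subsingleton
  · have := h.2.2 i hi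
    obtain ⟨e⟩ := ext_equiv (ModuleCat.of R (Module.Dual R M)) (ModuleCat.of R R) i
    exact e.symm.toEquiv.subsingleton

lemma GD.retract {K M : Type} [AddCommGroup M] [Module R M] [AddCommGroup K] [Module R K]
    (h : GD R M) (f : K →ₗ[R] M) (g : M →ₗ[R] K) (hfg : g.comp f = LinearMap.id) : GD R K := by
  have hk : ∀ k, g (f k) = k := fun k => LinearMap.congr_fun hfg k
  refine ⟨⟨?_, ?_⟩, fun i hi => ?_, fun i hi => ?_⟩
  · intro a b hab
    have : Module.Dual.eval R M (f a) = Module.Dual.eval R M (f b) := by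
      refine LinearMap.ext fun φ => ?_
      exact LinearMap.congr_fun hab (φ.comp f)
    rw [← hk a, ← hk b, h.bij.1 this]
  · intro φ
    obtain ⟨m, hm⟩ := h.bij.2 (f.dualMap.dualMap φ)
    refine ⟨g m, LinearMap.ext fun α => ?_⟩
    have := LinearMap.congr_fun hm (α.comp g)
    refine Eq.trans this ?_
    change φ ((α.comp g).comp f) = φ α
    rw [LinearMap.comp_assoc, hfg, LinearMap.comp_id]
  · have := h.ext i hi
    exact subsingleton_of_retract f g hfg i
  · have := h.extd i hi
    refine subsingleton_of_retract g.dualMap f.dualMap ?_ i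
    refine LinearMap.ext fun α => ?_
    change (α.comp g).comp f = α
    rw [LinearMap.comp_assoc, hfg, LinearMap.comp_id]

variable [IsLocalRing R]

lemma reduce [IsNoetherianRing R] (n : ℕ) : ∀ (M : Type) [AddCommGroup M] [Module R M],
    Module.Finite R M → GD R M → ¬ Module.Free R M → Module.length R M ≤ n →
    ∃ (N : ModuleCat.{0} R), Module.Finite R N ∧ GD R N ∧ Nontrivial N ∧
      ∀ s : R, (∀ r ∈ maximalIdeal R, s * r = 0) → ∀ n : N, s • n = 0 := by
  induction n with
  | zero =>
    intro M _ _ hfin hM hfree hlen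
    exfalso
    have : Subsingleton M := Module.length_eq_zero_iff.1 (by simpa using hlen)
    exact hfree inferInstance
  | succ n ih =>
    intro M _ _ hfin hM hfree hlen
    by_cases hs : ∀ s : R, (∀ r ∈ maximalIdeal R, s * r = 0) → ∀ n : M, s • n = 0
    · refine ⟨ModuleCat.of R M, hfin, hM, ?_, hs⟩
      by_contra hnt
      rw [not_nontrivial_iff_subsingleton] at hnt
      have : Subsingleton M := hnt
      exact hfree inferInstance
    · push Not at hs
      obtain ⟨s, hs, x, hx⟩ := hs
      obtain ⟨f, hf⟩ : ∃ f : Module.Dual R M, f (s • x) ≠ 0 := by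
        by_contra! hc
        apply hx
        apply hM.bij.1
        refine LinearMap.ext fun f => ?_
        rw [map_zero]
        exact hc f
      have hu : IsUnit (f x) := by
        by_contra hnu
        apply hf
        rw [map_smul, smul_eq_mul]
        exact hs _ hnu
      obtain ⟨f, hf⟩ : ∃ f : Module.Dual R M, f x = 1 := by
        obtain ⟨u, hu⟩ := hu
        refine ⟨(↑u⁻¹ : R) • f, ?_⟩
        rw [LinearMap.smul_apply, ← hu, smul_eq_mul, Units.inv_mul]
      let K := LinearMap.ker f
      let π : M →ₗ[R] K := (LinearMap.id - (LinearMap.toSpanSingleton R M x).comp f).codRestrict K (by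
        intro c
        simp [K, hf])
      have hπ : ∀ c, (π c : M) = c - f c • x := fun c => rfl
      have hret : π.comp K.subtype = LinearMap.id := by
        refine LinearMap.ext fun k => Subtype.ext ?_
        have hk : f k.1 = 0 := k.2
        change (π k.1 : M) = k.1
        rw [hπ, hk, zero_smul, sub_zero]
      let e : M ≃ₗ[R] K × R := LinearEquiv.ofLinearMap (π.prod f)
        (K.subtype.coprod (LinearMap.toSpanSingleton R M x))
        (by
          refine LinearMap.ext fun p => Prod.ext (Subtype.ext ?_) ?_
          · have hk : f p.1.1 = 0 := p.1.2
            simp [hπ, hf, hk]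
          · have hk : f p.1.1 = 0 := p.1.2
            simp [hf, hk])
        (by
          refine LinearMap.ext fun p => ?_
          simp [hπ])
      have hKf : ¬ Module.Free R K := by
        intro hK
        exact hfree (Module.Free.of_equiv e.symm)
      refine ih K inferInstance (hM.retract K.subtype π hret) hKf ?_
      rw [e.length_eq, Module.length_prod] at hlen
      have h1 : (1 : ℕ∞) ≤ Module.length R R := by
        rw [Order.one_le_iff_ne_zero, Ne, Module.length_eq_zero_iff]
        exact not_subsingleton R
      have h2 : Module.length R K + 1 ≤ (n : ℕ∞) + 1 :=
        (add_le_add le_rfl h1).trans (by simpa using hlen)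
      exact (ENat.add_le_add_iff_right (by simp)).1 h2

lemma P.shift {N : Type} [AddCommGroup N] [Module R N] (hN : P (R := R) N) {a b : ℕ}
    (ea : mm R N ≃ₗ[R] (Fin a → kk R)) (eb : (N ⧸ mm R N) ≃ₗ[R] (Fin b → kk R)) (i : ℕ) (hi : 0 < i) :
    a * Module.length R (E R (kk R) i) = b * Module.length R (E R (kk R) (i+1)) := by
  have := length_shift (mm R N).subtype (mm R N).mkQ (Submodule.subtype_injective _)
    (Submodule.mkQ_surjective _) (LinearMap.exact_subtype_mkQ _) hN.ext i hi
  rwa [(preEquiv ea i).length_eq.symm, (preEquiv eb (i+1)).length_eq.symm, length_pow, length_pow] at this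

lemma P.shift_zero {N : Type} [AddCommGroup N] [Module R N] (hN : P (R := R) N) {a b : ℕ}
    (ea : mm R N ≃ₗ[R] (Fin a → kk R)) (eb : (N ⧸ mm R N) ≃ₗ[R] (Fin b → kk R)) :
    Module.length R (Module.Dual R N) + b * Module.length R (E R (kk R) 1) =
      b * Module.length R (E R (kk R) 0) + a * Module.length R (E R (kk R) 0) := by
  have := length_zero (mm R N).subtype (mm R N).mkQ (Submodule.subtype_injective _)
    (Submodule.mkQ_surjective _) (LinearMap.exact_subtype_mkQ _) hN.ext
  rwa [(preEquiv ea 0).length_eq.symm, (preEquiv eb 0).length_eq.symm, (preEquiv eb 1).length_eq.symm,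
    length_pow, length_pow, length_pow, zeroEquiv.length_eq] at this

lemma length_mm {N : Type} [AddCommGroup N] [Module R N] {a b : ℕ}
    (ea : mm R N ≃ₗ[R] (Fin a → kk R)) (eb : (N ⧸ mm R N) ≃ₗ[R] (Fin b → kk R)) :
    Module.length R N = a + b := by
  rw [Module.length_eq_add_of_exact (mm R N).subtype (mm R N).mkQ (Submodule.subtype_injective _)
    (Submodule.mkQ_surjective _) (LinearMap.exact_subtype_mkQ _), ea.length_eq, eb.length_eq,
    length_pow_kk, length_pow_kk]

lemma length_dual {V : Type} [AddCommGroup V] [Module R V] {b : ℕ}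
    (eb : V ≃ₗ[R] (Fin b → kk R)) :
    Module.length R (Module.Dual R V) = b * Module.length R (E R (kk R) 0) := by
  rw [← zeroEquiv.length_eq, ← (preEquiv eb 0).length_eq, length_pow]

lemma arith {a0 a1 b0 b1 r : ℕ} {μ : ℕ → ℕ} (h0 : a0 = b1 * r) (h1 : a1 = b0 * r)
    (hs0 : ∀ i, 0 < i → a0 * μ i = b0 * μ (i+1)) (hs1 : ∀ i, 0 < i → a1 * μ i = b1 * μ (i+1))
    (hz : (a1 + b1) + b0 * μ 1 = b0 * r + a0 * r) (hb : 0 < b0) (hμ : 0 < μ 1) (i : ℕ) (hi : 1 ≤ i) :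
    μ i = r ^ (i+1) - r ^ (i-1) := by
  subst h0 h1
  have hr : 0 < r := by
    rcases Nat.eq_zero_or_pos r with rfl | h
    · simp at hz; omega
    · exact h
  have e0 := hs0 1 one_pos
  have e1 := hs1 1 one_pos
  have hbb : b0 = b1 := by
    have : (r * μ 1) * (b1 * b1) = (r * μ 1) * (b0 * b0) := by
      calc (r * μ 1) * (b1 * b1) = b1 * (b1 * r * μ 1) := by ring
        _ = b1 * (b0 * μ 2) := by rw [e0]
        _ = b0 * (b1 * μ 2) := by ring
        _ = b0 * (b0 * r * μ 1) := by rw [e1]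
        _ = _ := by ring
    have := Nat.eq_of_mul_eq_mul_left (Nat.mul_pos hr hμ) this
    nlinarith [Nat.mul_self_inj.1 this]
  subst hbb
  have hstep : ∀ i, 0 < i → μ (i+1) = r * μ i := fun i hi => by
    have := hs0 i hi
    rw [mul_assoc] at this
    exact (Nat.eq_of_mul_eq_mul_left hb this).symm
  have hone : μ 1 + 1 = r ^ 2 := by
    apply Nat.eq_of_mul_eq_mul_left hb
    nlinarith
  have key : ∀ j, μ (j+1) + r ^ j = r ^ (j+2) := by
    intro j
    induction j with
    | zero => simpa using hone
    | succ j ih =>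
      rw [hstep _ (Nat.succ_pos j), pow_succ r (j), pow_succ r (j+2), ← ih]; ring
  obtain ⟨j, rfl⟩ := Nat.exists_eq_add_of_le' hi
  have hj := key j
  rw [Nat.add_sub_cancel]
  exact Nat.eq_sub_of_add_eq hj

theorem main [IsNoetherianRing R] (hng : ¬ IsGorensteinLocalRing R)
    (hm3 : (maximalIdeal R) ^ 3 = ⊥)
    (hex : ∃ M : ModuleCat.{0} R, Module.Finite R M ∧ GDimZero R M ∧ ¬ Module.Free R M) :
    ∃ r : ℕ, Module.length R (E R (kk R) 0) = r ∧
      ∀ i : ℕ, 1 ≤ i → Module.length R (E R (kk R) i) = ((r ^ (i + 1) - r ^ (i - 1) : ℕ) : ℕ∞) := by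
  have hart : IsArtinianRing R := (isArtinianRing_iff_isNilpotent_maximalIdeal R).2 ⟨3, hm3⟩
  have hfl : ∀ i, Module.length R (E R (kk R) i) ≠ ⊤ := fun i => by
    have : Module.Finite R (E R (kk R) i) :=
      ModuleCat.finite_ext R (ModuleCat.of R (kk R)) (ModuleCat.of R R) i
    exact Module.length_ne_top
  obtain ⟨M, hMf, hM, hfree⟩ := hex
  have hMl : Module.length R M ≠ ⊤ := Module.length_ne_top
  obtain ⟨l, hl⟩ := ENat.ne_top_iff_exists.1 hMl
  obtain ⟨N, hNf, hN, hnt, hsoc⟩ := reduce l M hMf (GD.of M hM) hfree hl.ge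
  have PN : P (R := R) N := ⟨hNf, hN.ext, hsoc⟩
  have hGn : IsNoetherian R (Module.Dual R N) := isNoetherian_linearMap R R N
  have hGf : Module.Finite R (Module.Dual R N) := Module.IsNoetherian.finite R _
  have PG : P (R := R) (Module.Dual R N) := ⟨hGf, hN.extd, fun s hs f => by
    refine LinearMap.ext fun n => ?_
    rw [LinearMap.smul_apply, ← map_smul, hsoc s hs, map_zero, LinearMap.zero_apply]⟩
  have hkill : ∀ {X : Type} [AddCommGroup X] [Module R X], P (R := R) X → 
      ∃ n : ℕ, Nonempty (mm R X ≃ₗ[R] (Fin n → kk R)) := by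
    intro X _ _ hX
    have := hX.fin
    exact vec_equiv _ fun r hr v => Subtype.ext (hX.mm_killed hm3 r hr v.1 v.2)
  obtain ⟨a0, ⟨ea0⟩⟩ := hkill PN
  obtain ⟨a1, ⟨ea1⟩⟩ := hkill PG
  obtain ⟨b0, ⟨eb0⟩⟩ := vec_equiv (R := R) (N ⧸ mm R N) smul_mkQ
  obtain ⟨b1, ⟨eb1⟩⟩ := vec_equiv (R := R) (Module.Dual R N ⧸ mm R (Module.Dual R N)) smul_mkQ
  have h0 := PN.mm_length hng hm3 (LinearEquiv.ofBijective _ hN.bij)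
  have h1 := PG.mm_length hng hm3 (LinearEquiv.refl R (Module.Dual R N))
  rw [ea0.length_eq, length_pow_kk, length_dual eb1] at h0
  rw [ea1.length_eq, length_pow_kk, length_dual eb0] at h1
  have hs0 := PN.shift ea0 eb0
  have hs1 := PG.shift ea1 eb1
  have hz := PN.shift_zero ea0 eb0
  rw [length_mm ea1 eb1] at hz
  choose μ hμ using fun i => ENat.ne_top_iff_exists.1 (hfl i)
  simp only [← hμ] at h0 h1 hs0 hs1 hz ⊢
  refine ⟨μ 0, rfl, fun i hi => ?_⟩
  norm_cast at h0 h1 hs0 hs1 hz ⊢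
  refine arith h0 h1 hs0 hs1 hz ?_ ?_ i hi
  · rw [Nat.pos_iff_ne_zero]
    rintro rfl
    have hsub : Subsingleton (N ⧸ mm R N) := eb0.toEquiv.subsingleton
    rw [Submodule.Quotient.subsingleton_iff] at hsub
    have : (⊤ : Submodule R N) = ⊥ := Submodule.eq_bot_of_le_smul_of_le_jacobson_bot (maximalIdeal R) ⊤
      (Module.finite_def.1 hNf) hsub.ge (IsLocalRing.maximalIdeal_le_jacobson _)
    exact top_ne_bot this
  · rw [Nat.pos_iff_ne_zero]
    intro h
    apply hng
    apply gorenstein_of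
    rw [← Module.length_eq_zero_iff (R := R), ← hμ, h]
    rfl

end S6

/-- Bass numbers: μ⁰ = r and μⁱ = r^(i+1) - r^(i-1) for i ≥ 1,
where μⁱ = dim_k Ext^i(k,R) is expressed as a length over R. -/
theorem stmt_6 (R : Type) [CommRing R] [IsNoetherianRing R] [IsLocalRing R]
    (hng : ¬ IsGorensteinLocalRing R)
    (hm3 : (IsLocalRing.maximalIdeal R) ^ 3 = ⊥)
    (hm2 : (IsLocalRing.maximalIdeal R) ^ 2 ≠ ⊥)
    (hex : ∃ M : ModuleCat R, Module.Finite R M ∧ GDimZero R M ∧ ¬ Module.Free R M) :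
    ∃ r : ℕ, typeLen R = (r : ℕ∞) ∧
      mlength R (ExtGrp R (R ⧸ IsLocalRing.maximalIdeal R) R 0) = (r : ℕ∞) ∧
      ∀ i : ℕ, 1 ≤ i →
        mlength R (ExtGrp R (R ⧸ IsLocalRing.maximalIdeal R) R i) =
          ((r ^ (i + 1) - r ^ (i - 1) : ℕ) : ℕ∞) := by
  obtain ⟨r, h0, h1⟩ := S6.main hng hm3 hex
  have key : ∀ i, mlength R (ExtGrp R (R ⧸ IsLocalRing.maximalIdeal R) R i) =
      Module.length R (S6.E R (S6.kk R) i) := by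
    intro i
    obtain ⟨e⟩ := S6.ext_equiv (ModuleCat.of R (S6.kk R)) (ModuleCat.of R R) i
    rw [← e.length_eq, Module.coe_length]
    rfl
  refine ⟨r, ?_, ?_, fun i hi => ?_⟩
  · rw [← h0, (S6.zeroEquiv (R := R) (A := S6.kk R)).length_eq, Module.coe_length]
    rfl
  · rw [key, h0]
  · rw [key, h1 i hi]
end
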